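/- Let u be the bounded C^∞ solution of the problem 𝒫u = f in Ω×(0,T), u = g on ∂Ω×(0,T), u(·,0) = g(·,0) in Ω, and let u_l^k (k ≥ 1, 1 ≤ l ≤ I) be the iterates of the overlapping optimized Schwarz waveform relaxation algorithm, i.e. u_l^k ∈ C^∞(cl(Ω_l×(0,T))) satisfy: 𝒫u_l^k = f in Ω_l×(0,T); the Robin transmission conditions ∂_{x_n}u_l^k(·,a_l,·) + p u_l^k(·,a_l,·) = ∂_{x_n}u_{l-1}^{k-1}(·,a_l,·) + p u_{l-1}^{k-1}(·,a_l,·) on D×(0,T) for 2 ≤ l ≤ I, and ∂_{x_n}u_l^k(·,b_l,·) + p u_l^k(·,b_l,·) = ∂_{x_n}u_{l+1}^{k-1}(·,b_l,·) + p u_{l+1}^{k-1}(·,b_l,·) on D×(0,T) for 1 ≤ l ≤ I−1; u_l^k = g on (∂Ω_l ∩ ∂Ω)×(0,T); u_l^k(·,0) = g(·,0) in Ω_l; u_1^k(·,α,·) = g(·,α,·) and u_I^k(·,β,·) = g(·,β,·). Then for every l ∈ {1,…,I} and every (x,t) ∈ Ω_l×(0,T), the sequence u_l^k(x,t) − u(x,t)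 converges to 0 as k → ∞. -/

import Mathlib

open Set Filter

/-- Spatial partial derivative `∂u/∂xᵢ` of a function `u : ℝⁿ → ℝ`. -/
noncomputable def pd1 {m : ℕ} (i : Fin m) (u : (Fin m → ℝ) → ℝ) (x : Fin m → ℝ) : ℝ :=
  fderiv ℝ u x (Pi.single i 1)

/-- Second spatial partial derivative `∂²u/∂xᵢ∂xⱼ`. -/
noncomputable def pd2 {m : ℕ} (i j : Fin m) (u : (Fin m → ℝ) → ℝ) (x : Fin m → ℝ) : ℝ :=
  pd1 i (fun y => pd1 j u y) x

/-- The parabolic operator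
`𝒫u = ∂ₜu − Σᵢⱼ aᵢⱼ(t) ∂ᵢ∂ⱼu + Σᵢ bᵢ(t) ∂ᵢu + c(t) u`. -/
noncomputable def parabolicOp {m : ℕ} (a : Fin m → Fin m → ℝ → ℝ) (b : Fin m → ℝ → ℝ)
    (c : ℝ → ℝ) (u : (Fin m → ℝ) → ℝ → ℝ) (x : Fin m → ℝ) (t : ℝ) : ℝ :=
  deriv (fun s => u x s) t
    - ∑ i, ∑ j, a i j t * pd2 i j (fun y => u y t) x
    + ∑ i, b i t * pd1 i (fun y => u y t) x
    + c t * u x t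

/-- The transformed operator `𝒫ₚε = ∂ₜε − Σᵢⱼ aᵢⱼ ∂ᵢ∂ⱼε
+ Σ_{i<n} (2p aᵢₙ + bᵢ) ∂ᵢε + (2p aₙₙ + bₙ) ∂ₙε + (c − p bₙ − p² aₙₙ) ε`,
in dimension `n+1`, the last coordinate playing the role of `xₙ`. -/
noncomputable def transOp {n : ℕ} (p : ℝ) (a : Fin (n+1) → Fin (n+1) → ℝ → ℝ)
    (b : Fin (n+1) → ℝ → ℝ) (c : ℝ → ℝ)
    (ε : (Fin (n+1) → ℝ) → ℝ → ℝ) (x : Fin (n+1) → ℝ) (t : ℝ) : ℝ :=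
  deriv (fun s => ε x s) t
    - ∑ i, ∑ j, a i j t * pd2 i j (fun y => ε y t) x
    + ∑ i ∈ Finset.univ.erase (Fin.last n),
        (2 * p * a i (Fin.last n) t + b i t) * pd1 i (fun y => ε y t) x
    + (2 * p * a (Fin.last n) (Fin.last n) t + b (Fin.last n) t) *
        pd1 (Fin.last n) (fun y => ε y t) x
    + (c t - p * b (Fin.last n) t - p ^ 2 * a (Fin.last n) (Fin.last n) t) * ε x t


open scoped ContDiff Topology

section Calculus

/-- A function on `[l, r]` that is nonnegative and vanishes at `l` has nonnegative slope at `l`. -/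
lemma HasDerivWithinAt.nonneg_of_left_end {h : ℝ → ℝ} {h' l r : ℝ} (hlr : l < r)
    (hd : HasDerivWithinAt h h' (Icc l r) l) (h0 : h l = 0) (hp : ∀ y ∈ Icc l r, 0 ≤ h y) :
    0 ≤ h' := by
  rw [hasDerivWithinAt_iff_tendsto_slope] at hd
  have hne : (𝓝[Icc l r \ {l}] l).NeBot := by
    rw [Icc_sdiff_left]
    exact left_nhdsWithin_Ioc_neBot hlr
  refine ge_of_tendsto hd ?_
  filter_upwards [self_mem_nhdsWithin] with y hy
  have h1 : l ≤ y := hy.1.1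
  rw [slope_def_field, h0, sub_zero]
  exact div_nonneg (hp y hy.1) (by linarith)

/-- A function on `[l, r]` that is nonnegative and vanishes at `r` has nonpositive slope at `r`. -/
lemma HasDerivWithinAt.nonpos_of_right_end {h : ℝ → ℝ} {h' l r : ℝ} (hlr : l < r)
    (hd : HasDerivWithinAt h h' (Icc l r) r) (h0 : h r = 0) (hp : ∀ y ∈ Icc l r, 0 ≤ h y) :
    h' ≤ 0 := by
  rw [hasDerivWithinAt_iff_tendsto_slope] at hd
  have hne : (𝓝[Icc l r \ {r}] r).NeBot := by
    rw [Icc_sdiff_right]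
    exact right_nhdsWithin_Ico_neBot hlr
  refine le_of_tendsto hd ?_
  filter_upwards [self_mem_nhdsWithin] with y hy
  have h1 : y ≤ r := hy.1.2
  rw [slope_def_field, h0, sub_zero]
  exact div_nonpos_of_nonneg_of_nonpos (hp y hy.1) (by linarith)

lemma IsLocalMax.deriv_deriv_nonpos {h : ℝ → ℝ} {s : ℝ} (hm : IsLocalMax h s)
    (hc : ContinuousAt h s) : deriv (deriv h) s ≤ 0 := by
  by_contra! hpos
  have hmin : IsLocalMin h s := isLocalMin_of_deriv_deriv_pos hpos hm.deriv_eq_zero hc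
  have hconst : h =ᶠ[𝓝 s] fun _ => h s := by
    filter_upwards [hm, hmin] with y h1 h2 using le_antisymm h1 h2
  have := hconst.deriv.deriv_eq
  simp at this
  linarith

open scoped ComplexOrder MatrixOrder in
/-- The Frobenius pairing of a positive semidefinite and a negative semidefinite quadratic form is
nonpositive. -/
lemma sum_mul_nonpos_of_posSemidef {m : ℕ} {A H : Fin m → Fin m → ℝ}
    (hA : ∀ i j, A i j = A j i) (hA' : ∀ ξ : Fin m → ℝ, 0 ≤ ∑ i, ∑ j, A i j * ξ i * ξ j)
    (hH : ∀ ξ : Fin m → ℝ, ∑ i, ∑ j, H i j * ξ i * ξ j ≤ 0) :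
    ∑ i, ∑ j, A i j * H i j ≤ 0 := by
  have hpsd : (Matrix.of A).PosSemidef := by
    refine Matrix.PosSemidef.of_dotProduct_mulVec_nonneg ?_ fun ξ => ?_
    · ext i j
      simpa using hA j i
    · simpa [dotProduct, Matrix.mulVec, Finset.mul_sum, mul_comm, mul_left_comm, mul_assoc]
        using hA' ξ
  obtain ⟨B, hB⟩ := CStarAlgebra.nonneg_iff_eq_star_mul_self.mp hpsd.nonneg
  have hAB : ∀ i j, A i j = ∑ k, B k i * B k j := fun i j => by
    have := congrFun (congrFun hB i) j
    simpa [Matrix.mul_apply, Matrix.star_eq_conjTranspose] using this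
  calc ∑ i, ∑ j, A i j * H i j = ∑ k, ∑ i, ∑ j, H i j * B k i * B k j := by
        simp only [hAB, Finset.sum_mul]
        symm
        rw [Finset.sum_comm]
        refine Finset.sum_congr rfl fun i _ => ?_
        rw [Finset.sum_comm]
        exact Finset.sum_congr rfl fun j _ => Finset.sum_congr rfl fun k _ => by ring
    _ ≤ 0 := Finset.sum_nonpos fun k _ => hH (B k)

end Calculus

section DirectionalDerivatives

variable {E : Type*} [NormedAddCommGroup E] [NormedSpace ℝ E]

/-- The derivative of `F` in the constant direction `v`. -/
noncomputable def dirDeriv (v : E) (F : E → ℝ) (q : E) : ℝ := fderiv ℝ F q v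

lemma ContDiffOn.dirDeriv {F : E → ℝ} {O : Set E} (hF : ContDiffOn ℝ ∞ F O) (hO : IsOpen O)
    (v : E) : ContDiffOn ℝ ∞ (dirDeriv v F) O :=
  (hF.fderiv_of_isOpen hO (by simp)).clm_apply contDiffOn_const

lemma dirDeriv_dirDeriv {F : E → ℝ} {O : Set E} (hF : ContDiffOn ℝ ∞ F O) (hO : IsOpen O)
    {q : E} (hq : q ∈ O) (v w : E) :
    dirDeriv v (dirDeriv w F) q = fderiv ℝ (fderiv ℝ F) q v w := by
  have hd : DifferentiableAt ℝ (fderiv ℝ F) q :=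
    ((hF.fderiv_of_isOpen hO (m := ∞) (by simp)).contDiffAt (hO.mem_nhds hq)).differentiableAt
      (by simp)
  unfold dirDeriv
  rw [fderiv_clm_apply hd (by fun_prop)]
  simp

lemma dirDeriv_comm {F : E → ℝ} {O : Set E} (hF : ContDiffOn ℝ ∞ F O) (hO : IsOpen O)
    {q : E} (hq : q ∈ O) (v w : E) :
    dirDeriv v (dirDeriv w F) q = dirDeriv w (dirDeriv v F) q := by
  rw [dirDeriv_dirDeriv hF hO hq, dirDeriv_dirDeriv hF hO hq]
  exact (hF.contDiffAt (hO.mem_nhds hq)).isSymmSndFDerivAt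
    (by simpa using WithTop.coe_le_coe.2 (le_top : (2 : ℕ∞) ≤ ⊤)) v w

lemma dirDeriv_congr {F G : E → ℝ} {O : Set E} (hO : IsOpen O) (h : EqOn F G O) (v : E) :
    EqOn (dirDeriv v F) (dirDeriv v G) O := fun q hq => by
  unfold dirDeriv
  rw [(h.eventuallyEq_of_mem (hO.mem_nhds hq)).fderiv_eq]

lemma hasDerivAt_comp_line {F : E → ℝ} {q v : E} {s : ℝ} (hF : DifferentiableAt ℝ F (q + s • v)) :
    HasDerivAt (fun s : ℝ => F (q + s • v)) (dirDeriv v F (q + s • v)) s := by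
  have h1 : HasDerivAt (fun s : ℝ => q + s • v) v s := by
    simpa using ((hasDerivAt_id s).smul_const v).const_add q
  exact hF.hasFDerivAt.comp_hasDerivAt s h1

lemma hasDerivAt_dirDeriv {F : E → ℝ} {q v : E} (hF : DifferentiableAt ℝ F q) :
    HasDerivAt (fun s : ℝ => F (q + s • v)) (dirDeriv v F q) 0 := by
  simpa using hasDerivAt_comp_line (q := q) (v := v) (s := 0) (by simpa using hF)

lemma dirDeriv_sub_mul {F G : E → ℝ} {q : E} (hF : DifferentiableAt ℝ F q)
    (hG : DifferentiableAt ℝ G q) (k : ℝ) (v : E) :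
    dirDeriv v (fun q => F q - k * G q) q = dirDeriv v F q - k * dirDeriv v G q := by
  unfold dirDeriv
  rw [fderiv_fun_sub hF (hG.const_mul k), fderiv_const_mul hG]
  simp

lemma dirDeriv_dirDeriv_nonpos_of_isLocalMax {F : E → ℝ} {O : Set E} (hF : ContDiffOn ℝ ∞ F O)
    (hO : IsOpen O) {q : E} (hq : q ∈ O) (v : E)
    (hmax : IsLocalMax (fun s : ℝ => F (q + s • v)) 0) :
    dirDeriv v (dirDeriv v F) q ≤ 0 := by
  have hline : ContinuousAt (fun s : ℝ => q + s • v) 0 := by fun_prop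
  have hmem : ∀ᶠ s : ℝ in 𝓝 0, q + s • v ∈ O :=
    hline.eventually_mem (by simpa using hO.mem_nhds hq)
  have hdiff : ∀ {G : E → ℝ}, ContDiffOn ℝ ∞ G O → ∀ y ∈ O, DifferentiableAt ℝ G y :=
    fun hG y hy => (hG.contDiffAt (hO.mem_nhds hy)).differentiableAt (by simp)
  have h1 : deriv (fun s : ℝ => F (q + s • v)) =ᶠ[𝓝 0] fun s => dirDeriv v F (q + s • v) := by
    filter_upwards [hmem] with s hs
    exact (hasDerivAt_comp_line (hdiff hF _ hs)).deriv
  have h2 := hmax.deriv_deriv_nonpos (by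
    simpa using (hasDerivAt_dirDeriv (v := v) (hdiff hF _ hq)).continuousAt)
  rw [h1.deriv_eq, (hasDerivAt_dirDeriv (hdiff (hF.dirDeriv hO v) _ hq)).deriv] at h2
  exact h2

end DirectionalDerivatives

section ParabolicOperator

variable {m : ℕ} {a : Fin m → Fin m → ℝ → ℝ} {b : Fin m → ℝ → ℝ} {c : ℝ → ℝ}
  {z : (Fin m → ℝ) → ℝ → ℝ} {O : Set ((Fin m → ℝ) × ℝ)}

/-- The space-time direction of the `i`-th space coordinate. -/
noncomputable def spaceDir (i : Fin m) : (Fin m → ℝ) × ℝ := (Pi.single i 1, 0)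

lemma pd1_eq_dirDeriv {x : Fin m → ℝ} {t : ℝ}
    (hz : DifferentiableAt ℝ (Function.uncurry z) (x, t)) (i : Fin m) :
    pd1 i (fun y => z y t) x = dirDeriv (spaceDir i) (Function.uncurry z) (x, t) := by
  have h1 : HasFDerivAt (fun y : Fin m → ℝ => (y, t)) (ContinuousLinearMap.inl ℝ _ ℝ) x :=
    hasFDerivAt_prodMk_left x t
  have h2 := hz.hasFDerivAt.comp x h1
  have h3 : HasFDerivAt (fun y => z y t) _ x := h2
  rw [pd1, h3.fderiv]
  simp [dirDeriv, spaceDir]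

lemma deriv_eq_dirDeriv {x : Fin m → ℝ} {t : ℝ}
    (hz : DifferentiableAt ℝ (Function.uncurry z) (x, t)) :
    deriv (fun s => z x s) t = dirDeriv (0, 1) (Function.uncurry z) (x, t) := by
  have h1 : HasDerivAt (fun s : ℝ => (x, s)) ((0 : Fin m → ℝ), (1 : ℝ)) t :=
    (hasDerivAt_const t x).prodMk (hasDerivAt_id t)
  have h2 : HasDerivAt (fun s => z x s) _ t := hz.hasFDerivAt.comp_hasDerivAt t h1
  rw [h2.deriv]
  rfl

lemma ContDiffOn.differentiableAt_of_isOpen {E : Type*} [NormedAddCommGroup E] [NormedSpace ℝ E]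
    {F : E → ℝ} {O : Set E} (hF : ContDiffOn ℝ ∞ F O) (hO : IsOpen O) {q : E} (hq : q ∈ O) :
    DifferentiableAt ℝ F q :=
  (hF.contDiffAt (hO.mem_nhds hq)).differentiableAt (by simp)

lemma pd2_eq_dirDeriv (hz : ContDiffOn ℝ ∞ (Function.uncurry z) O) (hO : IsOpen O)
    {x : Fin m → ℝ} {t : ℝ} (hq : (x, t) ∈ O) (i j : Fin m) :
    pd2 i j (fun y => z y t) x
      = dirDeriv (spaceDir i) (dirDeriv (spaceDir j) (Function.uncurry z)) (x, t) := by
  have hev : (fun y => pd1 j (fun y => z y t) y) =ᶠ[𝓝 x]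
      fun y => dirDeriv (spaceDir j) (Function.uncurry z) (y, t) := by
    have hc : ContinuousAt (fun y : Fin m → ℝ => (y, t)) x := by fun_prop
    filter_upwards [hc.eventually_mem (hO.mem_nhds hq)] with y hy
    exact pd1_eq_dirDeriv (hz.differentiableAt_of_isOpen hO hy) j
  rw [pd2, pd1, hev.fderiv_eq]
  exact pd1_eq_dirDeriv (z := fun y t => dirDeriv (spaceDir j) (Function.uncurry z) (y, t))
    ((hz.dirDeriv hO _).differentiableAt_of_isOpen hO hq) i

/-- The parabolic operator with coefficients frozen at time `t`, written with space-time
directional derivatives. -/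
noncomputable def frozenOp (a : Fin m → Fin m → ℝ → ℝ) (b : Fin m → ℝ → ℝ) (c : ℝ → ℝ) (t : ℝ)
    (F : (Fin m → ℝ) × ℝ → ℝ) (q : (Fin m → ℝ) × ℝ) : ℝ :=
  dirDeriv (0, 1) F q - ∑ i, ∑ j, a i j t * dirDeriv (spaceDir i) (dirDeriv (spaceDir j) F) q
    + ∑ i, b i t * dirDeriv (spaceDir i) F q + c t * F q

lemma parabolicOp_eq_frozenOp (hz : ContDiffOn ℝ ∞ (Function.uncurry z) O) (hO : IsOpen O)
    {x : Fin m → ℝ} {t : ℝ} (hq : (x, t) ∈ O) :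
    parabolicOp a b c z x t = frozenOp a b c t (Function.uncurry z) (x, t) := by
  have hd := hz.differentiableAt_of_isOpen hO hq
  simp only [parabolicOp, frozenOp, deriv_eq_dirDeriv hd, pd1_eq_dirDeriv hd,
    pd2_eq_dirDeriv hz hO hq]
  rfl

lemma frozenOp_congr {F G : (Fin m → ℝ) × ℝ → ℝ} (hO : IsOpen O) (h : EqOn F G O) {t : ℝ}
    {q : (Fin m → ℝ) × ℝ} (hq : q ∈ O) : frozenOp a b c t F q = frozenOp a b c t G q := by
  simp only [frozenOp, dirDeriv_congr hO h _ hq, h hq,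
    dirDeriv_congr hO (dirDeriv_congr hO h _) _ hq]

lemma frozenOp_sub_mul {F G : (Fin m → ℝ) × ℝ → ℝ} (hF : ContDiffOn ℝ ∞ F O)
    (hG : ContDiffOn ℝ ∞ G O) (hO : IsOpen O) (k t : ℝ) {q : (Fin m → ℝ) × ℝ} (hq : q ∈ O) :
    frozenOp a b c t (fun q => F q - k * G q) q
      = frozenOp a b c t F q - k * frozenOp a b c t G q := by
  have h1 : ∀ v, EqOn (dirDeriv v fun q => F q - k * G q)
      (fun q => dirDeriv v F q - k * dirDeriv v G q) O := fun v y hy =>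
    dirDeriv_sub_mul (hF.differentiableAt_of_isOpen hO hy) (hG.differentiableAt_of_isOpen hO hy) k v
  have h2 : ∀ v w, dirDeriv w (dirDeriv v fun q => F q - k * G q) q
      = dirDeriv w (dirDeriv v F) q - k * dirDeriv w (dirDeriv v G) q := fun v w => by
    rw [dirDeriv_congr hO (h1 v) w hq, dirDeriv_sub_mul
      ((hF.dirDeriv hO v).differentiableAt_of_isOpen hO hq)
      ((hG.dirDeriv hO v).differentiableAt_of_isOpen hO hq)]
  simp only [frozenOp, h1 _ hq, h2, mul_sub, Finset.sum_sub_distrib]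
  simp only [mul_add, mul_sub, Finset.mul_sum, mul_left_comm k]
  ring

lemma parabolicOp_sub_mul {y : (Fin m → ℝ) → ℝ → ℝ}
    (hz : ContDiffOn ℝ ∞ (Function.uncurry z) O) (hy : ContDiffOn ℝ ∞ (Function.uncurry y) O)
    (hO : IsOpen O) (k : ℝ) {x : Fin m → ℝ} {t : ℝ} (hq : (x, t) ∈ O) :
    parabolicOp a b c (fun x t => z x t - k * y x t) x t
      = parabolicOp a b c z x t - k * parabolicOp a b c y x t := by
  rw [parabolicOp_eq_frozenOp hz hO hq, parabolicOp_eq_frozenOp hy hO hq,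
    ← frozenOp_sub_mul hz hy hO k t hq]
  exact parabolicOp_eq_frozenOp (hz.sub (contDiffOn_const.mul hy)) hO hq

/-- Directional derivatives commute with the parabolic operator, whose coefficients do not depend
on the space variable. -/
lemma frozenOp_dirDeriv_eq_zero {F : (Fin m → ℝ) × ℝ → ℝ} (hF : ContDiffOn ℝ ∞ F O)
    (hO : IsOpen O) {t : ℝ} {q v : (Fin m → ℝ) × ℝ} (hq : q ∈ O)
    (h0 : ∀ᶠ s : ℝ in 𝓝 0, frozenOp a b c t F (q + s • v) = 0) :
    frozenOp a b c t (dirDeriv v F) q = 0 := by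
  have hD : ∀ {G : (Fin m → ℝ) × ℝ → ℝ}, ContDiffOn ℝ ∞ G O →
      HasDerivAt (fun s : ℝ => G (q + s • v)) (dirDeriv v G q) 0 := fun hG =>
    hasDerivAt_dirDeriv (hG.differentiableAt_of_isOpen hO hq)
  have h1 : HasDerivAt (fun s : ℝ => frozenOp a b c t F (q + s • v))
      (dirDeriv v (dirDeriv (0, 1) F) q
        - ∑ i, ∑ j, a i j t * dirDeriv v (dirDeriv (spaceDir i) (dirDeriv (spaceDir j) F)) q
        + ∑ i, b i t * dirDeriv v (dirDeriv (spaceDir i) F) q + c t * dirDeriv v F q) 0 := by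
    refine (((hD (hF.dirDeriv hO _)).sub ?_).add ?_).add ((hD hF).const_mul _)
    · exact HasDerivAt.fun_sum fun i _ => HasDerivAt.fun_sum fun j _ =>
        (hD ((hF.dirDeriv hO _).dirDeriv hO _)).const_mul _
    · exact HasDerivAt.fun_sum fun i _ => (hD (hF.dirDeriv hO _)).const_mul _
  have h2 : HasDerivAt (fun s : ℝ => frozenOp a b c t F (q + s • v)) 0 0 :=
    (hasDerivAt_const (0 : ℝ) (0 : ℝ)).congr_of_eventuallyEq h0
  rw [← h1.unique h2]
  have h3 : ∀ i j, dirDeriv v (dirDeriv (spaceDir i) (dirDeriv (spaceDir j) F)) q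
      = dirDeriv (spaceDir i) (dirDeriv (spaceDir j) (dirDeriv v F)) q := fun i j => by
    rw [dirDeriv_comm (hF.dirDeriv hO _) hO hq]
    exact dirDeriv_congr hO (fun y hy => dirDeriv_comm hF hO hy _ _) _ hq
  simp only [frozenOp, h3, dirDeriv_comm hF hO hq v]

/-- At a point where `z` vanishes and has a local maximum in space and a one-sided maximum in time,
the parabolic operator is nonnegative. -/
lemma parabolicOp_nonneg_of_max (hz : ContDiffOn ℝ ∞ (Function.uncurry z) O) (hO : IsOpen O)
    {x : Fin m → ℝ} {t : ℝ} (hq : (x, t) ∈ O) (hsymm : ∀ i j, a i j t = a j i t)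
    (hpos : ∀ ξ : Fin m → ℝ, 0 ≤ ∑ i, ∑ j, a i j t * ξ i * ξ j) (h0 : z x t = 0)
    (hspace : ∀ᶠ y in 𝓝 x, z y t ≤ 0) {t' : ℝ} (ht' : t' < t)
    (htime : ∀ s ∈ Icc t' t, z x s ≤ 0) :
    0 ≤ parabolicOp a b c z x t := by
  have hd := hz.differentiableAt_of_isOpen hO hq
  have hmax : IsLocalMax (fun y => z y t) x := by
    filter_upwards [hspace] with y hy
    simpa [h0] using hy
  have hgrad : ∀ i, pd1 i (fun y => z y t) x = 0 := fun i => by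
    simp [pd1, hmax.fderiv_eq_zero]
  have htd : 0 ≤ deriv (fun s => z x s) t := by
    have h1 : DifferentiableAt ℝ (fun s => z x s) t :=
      hd.comp t (by fun_prop : DifferentiableAt ℝ (fun s : ℝ => (x, s)) t)
    have := h1.hasDerivAt.neg.hasDerivWithinAt.nonpos_of_right_end ht' (by simp [h0])
      (fun s hs => by simpa using htime s hs)
    linarith
  have hhess : ∑ i, ∑ j, a i j t * pd2 i j (fun y => z y t) x ≤ 0 := by
    refine sum_mul_nonpos_of_posSemidef hsymm hpos fun ξ => ?_
    have hξ : ((ξ, 0) : (Fin m → ℝ) × ℝ) = ∑ i, ξ i • spaceDir i := by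
      ext j
      · simp [spaceDir, Prod.fst_sum, Finset.sum_apply, Pi.single_apply]
      · simp [spaceDir, Prod.snd_sum]
    have hline : IsLocalMax (fun s : ℝ => Function.uncurry z ((x, t) + s • (ξ, 0))) 0 := by
      have hc : ContinuousAt (fun s : ℝ => x + s • ξ) 0 := by fun_prop
      have hc' : Tendsto (fun s : ℝ => x + s • ξ) (𝓝 0) (𝓝 x) := by
        simpa [ContinuousAt] using hc
      filter_upwards [hc'.eventually hspace] with s hs
      simpa [h0] using hs
    have h := dirDeriv_dirDeriv_nonpos_of_isLocalMax hz hO hq (ξ, 0) hline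
    rw [dirDeriv_dirDeriv hz hO hq, hξ] at h
    simp only [map_sum, map_smul, _root_.sum_apply,
      _root_.smul_apply, smul_eq_mul] at h
    simp only [pd2_eq_dirDeriv hz hO hq, dirDeriv_dirDeriv hz hO hq]
    refine le_of_eq_of_le ?_ h
    rw [Finset.sum_comm]
    refine Finset.sum_congr rfl fun i _ => ?_
    rw [Finset.mul_sum]
    exact Finset.sum_congr rfl fun j _ => by ring
  simp only [parabolicOp, hgrad, h0]
  simp
  linarith

end ParabolicOperator

section Cylinders

variable {n : ℕ} {D : Set (Fin n → ℝ)} {l r T : ℝ}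

/-- The cylinder `D × (l, r)`, the last coordinate running through `(l, r)`. -/
def cylinder (D : Set (Fin n → ℝ)) (l r : ℝ) : Set (Fin (n + 1) → ℝ) :=
  {x | Fin.init x ∈ D ∧ x (Fin.last n) ∈ Ioo l r}

lemma isOpen_cylinder (hD : IsOpen D) (l r : ℝ) : IsOpen (cylinder D l r) :=
  (hD.preimage (by fun_prop : Continuous fun x : Fin (n + 1) → ℝ => (Fin.init x : Fin n → ℝ))).inter
    (isOpen_Ioo.preimage (continuous_apply (Fin.last n)))

lemma mem_closure_cylinder (hlr : l < r) {x : Fin (n + 1) → ℝ} :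
    x ∈ closure (cylinder D l r) ↔ Fin.init x ∈ closure D ∧ x (Fin.last n) ∈ Icc l r := by
  constructor
  · intro hx
    have hinit : Continuous fun x : Fin (n + 1) → ℝ => (Fin.init x : Fin n → ℝ) := by fun_prop
    refine ⟨map_mem_closure hinit hx fun y hy => hy.1, ?_⟩
    rw [← closure_Ioo hlr.ne]
    have hlast : Continuous fun x : Fin (n + 1) → ℝ => x (Fin.last n) := by fun_prop
    have hmaps : MapsTo (fun x : Fin (n + 1) → ℝ => x (Fin.last n)) (cylinder D l r) (Ioo l r) :=
      fun y hy => hy.2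
    have h := map_mem_closure hlast hx hmaps
    exact h
  · rintro ⟨h1, h2⟩
    rw [← closure_Ioo hlr.ne] at h2
    have hsnoc : Continuous fun y : (Fin n → ℝ) × ℝ => (Fin.snoc y.1 y.2 : Fin (n + 1) → ℝ) := by
      fun_prop
    have := map_mem_closure (t := cylinder D l r) hsnoc
      (show (Fin.init x, x (Fin.last n)) ∈ closure (D ×ˢ Ioo l r) by
        rw [closure_prod_eq]; exact ⟨h1, h2⟩)
      (fun y hy => by simpa [cylinder] using hy)
    simpa using this

lemma snoc_mem_closure_cylinder (hlr : l < r) {X : Fin n → ℝ} (hX : X ∈ closure D) {y : ℝ}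
    (hy : y ∈ Icc l r) : (Fin.snoc X y : Fin (n + 1) → ℝ) ∈ closure (cylinder D l r) := by
  rw [mem_closure_cylinder hlr]
  simpa using ⟨hX, hy⟩

lemma isCompact_closure_cylinder (hD : Bornology.IsBounded D) (hlr : l < r) :
    IsCompact (closure (cylinder D l r)) := by
  have hc : IsCompact (closure D ×ˢ Icc l r) := hD.isCompact_closure.prod isCompact_Icc
  have hsnoc : Continuous fun y : (Fin n → ℝ) × ℝ => (Fin.snoc y.1 y.2 : Fin (n + 1) → ℝ) := by
    fun_prop
  refine (hc.image hsnoc).of_isClosed_subset isClosed_closure fun x hx => ?_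
  rw [mem_closure_cylinder hlr] at hx
  exact ⟨(Fin.init x, x (Fin.last n)), hx, by simp⟩

lemma hasDerivAt_snoc (X : Fin n → ℝ) (y : ℝ) :
    HasDerivAt (fun s : ℝ => (Fin.snoc X s : Fin (n + 1) → ℝ)) (Pi.single (Fin.last n) 1) y := by
  have h := hasDerivAt_update (𝕜 := ℝ) (Fin.snoc X 0 : Fin (n + 1) → ℝ) (Fin.last n) y
  exact h.congr_of_eventuallyEq (Eventually.of_forall fun s => (Fin.update_snoc_last _ _ _).symm)

/-- The one-sided derivative, relative to `[l, r]`, in the last space coordinate. -/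
noncomputable def normalDeriv (l r : ℝ) (z : (Fin (n + 1) → ℝ) → ℝ → ℝ) (x : Fin (n + 1) → ℝ)
    (t : ℝ) : ℝ :=
  derivWithin (fun s => z (Fin.snoc (Fin.init x) s) t) (Icc l r) (x (Fin.last n))

variable {z : (Fin (n + 1) → ℝ) → ℝ → ℝ}

lemma HasFDerivWithinAt.hasDerivWithinAt_snoc (hlr : l < r) {x : Fin (n + 1) → ℝ} {t : ℝ}
    (hx : x ∈ closure (cylinder D l r)) (ht : t ∈ Icc 0 T) {F' : (Fin (n + 1) → ℝ) × ℝ →L[ℝ] ℝ}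
    (hF : HasFDerivWithinAt (Function.uncurry z) F' (closure (cylinder D l r) ×ˢ Icc 0 T) (x, t)) :
    HasDerivWithinAt (fun s => z (Fin.snoc (Fin.init x) s) t) (F' (spaceDir (Fin.last n)))
      (Icc l r) (x (Fin.last n)) := by
  have h1 : HasDerivWithinAt
      (fun s : ℝ => ((Fin.snoc (Fin.init x) s : Fin (n + 1) → ℝ), t)) (spaceDir (Fin.last n))
      (Icc l r) (x (Fin.last n)) :=
    ((hasDerivAt_snoc (Fin.init x) _).prodMk (hasDerivAt_const _ t)).hasDerivWithinAt
  rw [mem_closure_cylinder hlr] at hx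
  exact HasFDerivWithinAt.comp_hasDerivWithinAt (l := Function.uncurry z) (x (Fin.last n))
    (t := closure (cylinder D l r) ×ˢ Icc 0 T)
    (by simpa using hF) h1
    fun s hs => ⟨snoc_mem_closure_cylinder hlr hx.1 hs, ht⟩

lemma uniqueDiffWithinAt_last (hlr : l < r) {x : Fin (n + 1) → ℝ}
    (hx : x ∈ closure (cylinder D l r)) : UniqueDiffWithinAt ℝ (Icc l r) (x (Fin.last n)) :=
  uniqueDiffOn_Icc hlr _ ((mem_closure_cylinder hlr).1 hx).2

lemma hasDerivWithinAt_normalDeriv (hlr : l < r)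
    (hz : ContDiffOn ℝ ∞ (Function.uncurry z) (closure (cylinder D l r) ×ˢ Icc 0 T))
    {x : Fin (n + 1) → ℝ} {t : ℝ} (hx : x ∈ closure (cylinder D l r)) (ht : t ∈ Icc 0 T) :
    HasDerivWithinAt (fun s => z (Fin.snoc (Fin.init x) s) t) (normalDeriv l r z x t)
      (Icc l r) (x (Fin.last n)) :=
  (HasFDerivWithinAt.hasDerivWithinAt_snoc hlr hx ht
    ((hz.differentiableOn (by simp)) (x, t) ⟨hx, ht⟩).hasFDerivWithinAt).differentiableWithinAt
      |>.hasDerivWithinAt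

lemma contDiffOn_normalDeriv (hlr : l < r)
    (hz : ContDiffOn ℝ ∞ (Function.uncurry z) (closure (cylinder D l r) ×ˢ Icc 0 T)) :
    ContDiffOn ℝ ∞ (Function.uncurry (normalDeriv l r z))
      (closure (cylinder D l r) ×ˢ Icc 0 T) := by
  rw [contDiffOn_infty] at hz ⊢
  intro k q hq
  have h := hz (k + 1) q hq
  push_cast at h
  rw [contDiffWithinAt_succ_iff_hasFDerivWithinAt' (by simp)] at h
  obtain ⟨u, hu, hus, -, F', hF', hcd⟩ := h
  rw [insert_eq_of_mem hq] at hu hus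
  have heq : ∀ q ∈ u, Function.uncurry (normalDeriv l r z) q = F' q (spaceDir (Fin.last n)) := by
    rintro ⟨x, t⟩ hxt
    have hmem := hus hxt
    exact (HasFDerivWithinAt.hasDerivWithinAt_snoc hlr hmem.1 hmem.2 (hF' _ hxt)).derivWithin
      (uniqueDiffWithinAt_last hlr hmem.1)
  exact (hcd.clm_apply contDiffWithinAt_const).congr_of_eventuallyEq
    (eventually_of_mem hu heq) (heq q (mem_of_mem_nhdsWithin hq hu))

/-- The Fréchet derivative within the closed cylinder, applied to the last coordinate direction,
is the one-sided derivative. -/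
lemma fderivWithin_eq_normalDeriv (hlr : l < r)
    (hz : ContDiffOn ℝ ∞ (Function.uncurry z) (closure (cylinder D l r) ×ˢ Icc 0 T))
    {x : Fin (n + 1) → ℝ} {t : ℝ} (hx : x ∈ closure (cylinder D l r)) (ht : t ∈ Icc 0 T) :
    fderivWithin ℝ (fun y => z y t) (closure (cylinder D l r)) x (Pi.single (Fin.last n) 1)
      = normalDeriv l r z x t := by
  have hd : DifferentiableWithinAt ℝ (fun y => z y t) (closure (cylinder D l r)) x :=
    DifferentiableWithinAt.comp (g := Function.uncurry z)
      (t := closure (cylinder D l r) ×ˢ Icc 0 T) x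
      (hz.differentiableOn (by simp) (x, t) ⟨hx, ht⟩)
      (by fun_prop : DifferentiableWithinAt ℝ (fun y : Fin (n + 1) → ℝ => (y, t)) _ x)
      fun y hy => ⟨hy, ht⟩
  have hx' := (mem_closure_cylinder hlr).1 hx
  have h := HasFDerivWithinAt.comp_hasDerivWithinAt (l := fun y => z y t)
    (f := fun s : ℝ => (Fin.snoc (Fin.init x) s : Fin (n + 1) → ℝ)) (x (Fin.last n))
    (t := closure (cylinder D l r))
    (by simpa using hd.hasFDerivWithinAt) (hasDerivAt_snoc (Fin.init x) _).hasDerivWithinAt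
    fun s hs => snoc_mem_closure_cylinder hlr hx'.1 hs
  exact (h.derivWithin (uniqueDiffWithinAt_last hlr hx)).symm

lemma isOpen_cylinder_prod (hD : IsOpen D) (l r T : ℝ) :
    IsOpen (cylinder D l r ×ˢ Ioo 0 T) := (isOpen_cylinder hD l r).prod isOpen_Ioo

lemma cylinder_prod_subset (D : Set (Fin n → ℝ)) (l r T : ℝ) :
    cylinder D l r ×ˢ Ioo 0 T ⊆ closure (cylinder D l r) ×ˢ Icc 0 T :=
  prod_mono subset_closure Ioo_subset_Icc_self

lemma normalDeriv_eq_dirDeriv (hD : IsOpen D)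
    (hz : ContDiffOn ℝ ∞ (Function.uncurry z) (closure (cylinder D l r) ×ˢ Icc 0 T)) :
    EqOn (Function.uncurry (normalDeriv l r z))
      (dirDeriv (spaceDir (Fin.last n)) (Function.uncurry z)) (cylinder D l r ×ˢ Ioo 0 T) := by
  rintro ⟨x, t⟩ hxt
  have hlr : l < r := hxt.1.2.1.trans hxt.1.2.2
  have hd : DifferentiableAt ℝ (Function.uncurry z) (x, t) :=
    (hz.mono (cylinder_prod_subset D l r T)).differentiableAt_of_isOpen
      (isOpen_cylinder_prod hD l r T) hxt
  have hcl := subset_closure hxt.1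
  exact (HasFDerivWithinAt.hasDerivWithinAt_snoc hlr hcl (Ioo_subset_Icc_self hxt.2)
    hd.hasFDerivAt.hasFDerivWithinAt).derivWithin (uniqueDiffWithinAt_last hlr hcl)

/-- Classical solutions, smooth up to the boundary, of the homogeneous parabolic equation in
`D × (l, r) × (0, T)` with vanishing initial and lateral data. -/
structure IsErrorSolution (a : Fin (n + 1) → Fin (n + 1) → ℝ → ℝ) (b : Fin (n + 1) → ℝ → ℝ)
    (c : ℝ → ℝ) (T : ℝ) (D : Set (Fin n → ℝ)) (l r : ℝ) (z : (Fin (n + 1) → ℝ) → ℝ → ℝ) :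
    Prop where
  smooth : ContDiffOn ℝ ∞ (Function.uncurry z) (closure (cylinder D l r) ×ˢ Icc 0 T)
  pde : ∀ x ∈ cylinder D l r, ∀ t ∈ Ioo 0 T, parabolicOp a b c z x t = 0
  initial : ∀ x ∈ closure (cylinder D l r), z x 0 = 0
  lateral : ∀ x ∈ closure (cylinder D l r), Fin.init x ∉ D → ∀ t ∈ Ioo 0 T, z x t = 0

/-- The Robin trace operator `∂ₙ + p`. -/
noncomputable def robinTrace (p l r : ℝ) (z : (Fin (n + 1) → ℝ) → ℝ → ℝ) (x : Fin (n + 1) → ℝ)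
    (t : ℝ) : ℝ :=
  normalDeriv l r z x t + p * z x t

variable {a : Fin (n + 1) → Fin (n + 1) → ℝ → ℝ} {b : Fin (n + 1) → ℝ → ℝ} {c : ℝ → ℝ}

lemma parabolicOp_zero_left {m : ℕ} {a : Fin m → Fin m → ℝ → ℝ} {b : Fin m → ℝ → ℝ} {c : ℝ → ℝ}
    (x : Fin m → ℝ) (t : ℝ) : parabolicOp a b c (fun _ _ => 0) x t = 0 := by
  simp [parabolicOp, pd1, pd2]

lemma IsErrorSolution.smoothOn_interior (hz : IsErrorSolution a b c T D l r z) :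
    ContDiffOn ℝ ∞ (Function.uncurry z) (cylinder D l r ×ˢ Ioo 0 T) :=
  hz.smooth.mono (cylinder_prod_subset D l r T)

lemma IsErrorSolution.neg (hD : IsOpen D) (hz : IsErrorSolution a b c T D l r z) :
    IsErrorSolution a b c T D l r (fun x t => -z x t) where
  smooth := hz.smooth.neg
  pde x hx t ht := by
    have h := parabolicOp_sub_mul (a := a) (b := b) (c := c) (z := fun _ _ => 0)
      contDiffOn_const hz.smoothOn_interior (isOpen_cylinder_prod hD l r T) 1
      (show (x, t) ∈ _ from ⟨hx, ht⟩)
    rw [parabolicOp_zero_left, hz.pde x hx t ht] at h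
    simpa using h
  initial x hx := by simp [hz.initial x hx]
  lateral x hx hxD t ht := by simp [hz.lateral x hx hxD t ht]

/-- The Robin trace of an error solution is again an error solution. -/
lemma IsErrorSolution.robin (hD : IsOpen D) (hlr : l < r)
    (hz : IsErrorSolution a b c T D l r z) (p : ℝ) :
    IsErrorSolution a b c T D l r (robinTrace p l r z) where
  smooth := (contDiffOn_normalDeriv hlr hz.smooth).add (contDiffOn_const.mul hz.smooth)
  pde x hx t ht := by
    have hO := isOpen_cylinder_prod hD l r T
    have hq : (x, t) ∈ cylinder D l r ×ˢ Ioo 0 T := ⟨hx, ht⟩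
    have hsm := hz.smoothOn_interior
    have h1 : EqOn (Function.uncurry (robinTrace p l r z))
        (fun q => dirDeriv (spaceDir (Fin.last n)) (Function.uncurry z) q
          - (-p) * Function.uncurry z q) (cylinder D l r ×ˢ Ioo 0 T) := fun q hq => by
      beta_reduce
      rw [← normalDeriv_eq_dirDeriv hD hz.smooth hq]
      simp [robinTrace, Function.uncurry]
    rw [parabolicOp_eq_frozenOp (O := cylinder D l r ×ˢ Ioo 0 T)
      (((hsm.dirDeriv hO _).sub (contDiffOn_const.mul hsm)).congr h1) hO hq,
      frozenOp_congr hO h1 hq, frozenOp_sub_mul (hsm.dirDeriv hO _) hsm hO _ _ hq,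
      ← parabolicOp_eq_frozenOp hsm hO hq, hz.pde x hx t ht,
      frozenOp_dirDeriv_eq_zero hsm hO hq]
    · simp
    · have hc : ContinuousAt (fun s : ℝ => (x, t) + s • spaceDir (Fin.last n)) 0 := by fun_prop
      filter_upwards [hc.eventually_mem (by simpa using hO.mem_nhds hq)] with s hs
      have hs' : (x, t) + s • spaceDir (Fin.last n) = (x + s • Pi.single (Fin.last n) 1, t) := by
        simp [spaceDir]
      rw [hs'] at hs ⊢
      rw [← parabolicOp_eq_frozenOp hsm hO hs, hz.pde _ hs.1 _ ht]
  initial x hx := by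
    have hx' := (mem_closure_cylinder hlr).1 hx
    have h : normalDeriv l r z x 0 = 0 :=
      (derivWithin_congr (fun s hs => hz.initial _ (snoc_mem_closure_cylinder hlr hx'.1 hs))
        (hz.initial _ (snoc_mem_closure_cylinder hlr hx'.1 hx'.2))).trans (by simp)
    simp [robinTrace, h, hz.initial x hx]
  lateral x hx hxD t ht := by
    have hx' := (mem_closure_cylinder hlr).1 hx
    have h0 : ∀ s ∈ Icc l r, z (Fin.snoc (Fin.init x) s) t = 0 := fun s hs =>
      hz.lateral _ (snoc_mem_closure_cylinder hlr hx'.1 hs) (by simpa using hxD) t ht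
    have h : normalDeriv l r z x t = 0 :=
      (derivWithin_congr h0 (h0 _ hx'.2)).trans (by simp)
    simp [robinTrace, h, hz.lateral x hx hxD t ht]

end Cylinders

section Barrier

variable {n : ℕ} {a : Fin (n + 1) → Fin (n + 1) → ℝ → ℝ} {b : Fin (n + 1) → ℝ → ℝ} {c : ℝ → ℝ}

/-- The comparison function `exp (μ t - p xₙ) ψ(xₙ)`. -/
noncomputable def barrier (p μ : ℝ) (ψ : ℝ → ℝ) (x : Fin (n + 1) → ℝ) (t : ℝ) : ℝ :=
  Real.exp (μ * t - p * x (Fin.last n)) * ψ (x (Fin.last n))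

/-- The one-dimensional operator obtained by applying the parabolic operator to `barrier`; the
numbers `A`, `q`, `s` are the diffusion, drift and reaction coefficients. -/
def barrierOp (μ A q s : ℝ) (ψ ψ' ψ'' : ℝ) : ℝ := μ * ψ - A * ψ'' + q * ψ' + s * ψ

/-- The drift coefficient of the transformed operator. -/
def transDrift (p : ℝ) (a : Fin (n + 1) → Fin (n + 1) → ℝ → ℝ) (b : Fin (n + 1) → ℝ → ℝ)
    (t : ℝ) : ℝ := b (Fin.last n) t + 2 * p * a (Fin.last n) (Fin.last n) t

/-- The reaction coefficient of the transformed operator. -/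
def transReaction (p : ℝ) (a : Fin (n + 1) → Fin (n + 1) → ℝ → ℝ) (b : Fin (n + 1) → ℝ → ℝ)
    (c : ℝ → ℝ) (t : ℝ) : ℝ :=
  c t - p * b (Fin.last n) t - p ^ 2 * a (Fin.last n) (Fin.last n) t

lemma pd1_comp_last {φ : ℝ → ℝ} {φ' : ℝ} {x : Fin (n + 1) → ℝ}
    (h : HasDerivAt φ φ' (x (Fin.last n))) (i : Fin (n + 1)) :
    pd1 i (fun y => φ (y (Fin.last n))) x = if i = Fin.last n then φ' else 0 := by
  have h1 : HasFDerivAt (fun y : Fin (n + 1) → ℝ => y (Fin.last n))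
      (ContinuousLinearMap.proj (R := ℝ) (φ := fun _ : Fin (n + 1) => ℝ) (Fin.last n)) x :=
    (ContinuousLinearMap.proj (R := ℝ) (φ := fun _ : Fin (n + 1) => ℝ)
      (Fin.last n)).hasFDerivAt
  have h2 : HasFDerivAt (fun y : Fin (n + 1) → ℝ => φ (y (Fin.last n))) _ x :=
    h.comp_hasFDerivAt x h1
  rw [pd1, h2.fderiv]
  simp [Pi.single_apply, eq_comm]

variable {p μ : ℝ} {ψ ψ' ψ'' : ℝ → ℝ}

lemma hasDerivAt_exp_mul {ψ₁ ψ₁' y : ℝ} {ψ : ℝ → ℝ} (τ : ℝ) (hψ : HasDerivAt ψ ψ₁' y)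
    (h : ψ y = ψ₁) :
    HasDerivAt (fun s => Real.exp (τ - p * s) * ψ s)
      (Real.exp (τ - p * y) * (ψ₁' - p * ψ₁)) y := by
  have h1 : HasDerivAt (fun s => τ - p * s) (-p) y := by
    simpa using ((hasDerivAt_id y).const_mul p).const_sub τ
  refine (h1.exp.mul hψ).congr_deriv ?_
  rw [h]
  ring

lemma parabolicOp_barrier (h1 : ∀ y, HasDerivAt ψ (ψ' y) y) (h2 : ∀ y, HasDerivAt ψ' (ψ'' y) y)
    (x : Fin (n + 1) → ℝ) (t : ℝ) :
    parabolicOp a b c (barrier p μ ψ) x t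
      = Real.exp (μ * t - p * x (Fin.last n)) *
        barrierOp μ (a (Fin.last n) (Fin.last n) t) (transDrift p a b t) (transReaction p a b c t)
          (ψ (x (Fin.last n))) (ψ' (x (Fin.last n))) (ψ'' (x (Fin.last n))) := by
  have ht : deriv (fun s => barrier p μ ψ x s) t = μ * barrier p μ ψ x t := by
    have h : HasDerivAt (fun s => μ * s - p * x (Fin.last n)) μ t := by
      simpa using ((hasDerivAt_id t).const_mul μ).sub_const (p * x (Fin.last n))
    have h' : HasDerivAt (fun s => barrier p μ ψ x s) _ t :=
      h.exp.mul_const (ψ (x (Fin.last n)))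
    rw [h'.deriv, barrier]
    ring
  have hp1 : ∀ i (y : Fin (n + 1) → ℝ), pd1 i (fun y => barrier p μ ψ y t) y
      = if i = Fin.last n then Real.exp (μ * t - p * y (Fin.last n)) *
          (ψ' (y (Fin.last n)) - p * ψ (y (Fin.last n))) else 0 := fun i y =>
    pd1_comp_last (hasDerivAt_exp_mul (μ * t) (h1 _) rfl) i
  have hp2 : ∀ i j, pd2 i j (fun y => barrier p μ ψ y t) x
      = if i = Fin.last n ∧ j = Fin.last n then Real.exp (μ * t - p * x (Fin.last n)) *
          (ψ'' (x (Fin.last n)) - p * ψ' (x (Fin.last n))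
            - p * (ψ' (x (Fin.last n)) - p * ψ (x (Fin.last n)))) else 0 := fun i j => by
    rw [pd2]
    simp only [hp1]
    by_cases hj : j = Fin.last n
    · simp only [hj, if_true, and_true]
      exact pd1_comp_last
        (hasDerivAt_exp_mul (μ * t) ((h2 _).sub ((h1 _).const_mul p)) rfl) i
    · simp [hj, pd1]
  simp only [parabolicOp, ht, hp1, hp2, ite_and, mul_ite, mul_zero, Finset.sum_ite_irrel,
    Finset.sum_ite_eq', Finset.mem_univ, if_true, Finset.sum_const_zero]
  simp only [barrier, barrierOp, transDrift, transReaction]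
  ring

lemma contDiff_barrier (hψ : ContDiff ℝ ∞ ψ) :
    ContDiff ℝ ∞ (Function.uncurry (barrier (n := n) p μ ψ)) := by
  unfold barrier Function.uncurry
  fun_prop

variable {D : Set (Fin n → ℝ)} {l r T : ℝ} {z : (Fin (n + 1) → ℝ) → ℝ → ℝ}

/-- Comparison principle: an error solution is bounded by a multiple `K` of a strict
supersolution as soon as at either end of `[l, r]` it satisfies the bound itself or the
corresponding bound on its Robin trace. -/
lemma IsErrorSolution.le_barrier (hD : IsOpen D) (hDb : Bornology.IsBounded D) (hlr : l < r)
    (hsymm : ∀ i j t, a i j t = a j i t)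
    (hell : ∀ t ∈ Ioo 0 T, ∀ ξ : Fin (n + 1) → ℝ, 0 ≤ ∑ i, ∑ j, a i j t * ξ i * ξ j)
    (hz : IsErrorSolution a b c T D l r z)
    (hψ : ContDiff ℝ ∞ ψ) (h1 : ∀ y, HasDerivAt ψ (ψ' y) y) (h2 : ∀ y, HasDerivAt ψ' (ψ'' y) y)
    (hpos : ∀ y ∈ Icc l r, 0 < ψ y)
    (hsuper : ∀ y ∈ Icc l r, ∀ t ∈ Ioo 0 T, 0 < barrierOp μ (a (Fin.last n) (Fin.last n) t)
      (transDrift p a b t) (transReaction p a b c t) (ψ y) (ψ' y) (ψ'' y))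
    {K : ℝ} (hK : 0 ≤ K)
    (hl : ∀ X ∈ D, ∀ t ∈ Ioo 0 T,
      z (Fin.snoc X l) t ≤ K * (Real.exp (μ * t - p * l) * ψ l) ∨
      (ψ' l < 0 ∧ K * (Real.exp (μ * t - p * l) * ψ' l) ≤ robinTrace p l r z (Fin.snoc X l) t))
    (hr : ∀ X ∈ D, ∀ t ∈ Ioo 0 T,
      z (Fin.snoc X r) t ≤ K * (Real.exp (μ * t - p * r) * ψ r) ∨
      (0 < ψ' r ∧ robinTrace p l r z (Fin.snoc X r) t ≤ K * (Real.exp (μ * t - p * r) * ψ' r)))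
    {x : Fin (n + 1) → ℝ} (hx : x ∈ closure (cylinder D l r)) {t : ℝ} (ht : t ∈ Ioo 0 T) :
    z x t ≤ K * barrier p μ ψ x t := by
  have hbpos : ∀ y ∈ closure (cylinder D l r), ∀ s, 0 < barrier p μ ψ y s := fun y hy s =>
    mul_pos (Real.exp_pos _) (hpos _ ((mem_closure_cylinder hlr).1 hy).2)
  have hsub : closure (cylinder D l r) ×ˢ Icc 0 t ⊆ closure (cylinder D l r) ×ˢ Icc 0 T :=
    prod_mono subset_rfl (Icc_subset_Icc_right ht.2.le)
  have hcont : ContinuousOn (fun q : (Fin (n + 1) → ℝ) × ℝ => z q.1 q.2 / barrier p μ ψ q.1 q.2)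
      (closure (cylinder D l r) ×ˢ Icc 0 t) :=
    (hz.smooth.continuousOn.mono hsub).div (contDiff_barrier hψ).continuous.continuousOn
      fun q hq => (hbpos _ hq.1 _).ne'
  obtain ⟨⟨x₀, t₀⟩, ⟨hx₀, ht₀⟩, hmax⟩ :=
    ((isCompact_closure_cylinder hDb hlr).prod isCompact_Icc).exists_isMaxOn
      ⟨(x, t), hx, ht.1.le, le_rfl⟩ hcont
  change x₀ ∈ _ at hx₀
  change t₀ ∈ Icc 0 t at ht₀
  set K₀ := z x₀ t₀ / barrier p μ ψ x₀ t₀ with hK₀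
  have hle : ∀ y ∈ closure (cylinder D l r), ∀ s ∈ Icc 0 t, z y s ≤ K₀ * barrier p μ ψ y s :=
    fun y hy s hs => (div_le_iff₀ (hbpos y hy s)).1 (hmax (show (y, s) ∈ _ from ⟨hy, hs⟩))
  have heq : z x₀ t₀ = K₀ * barrier p μ ψ x₀ t₀ := (div_mul_cancel₀ _ (hbpos x₀ hx₀ t₀).ne').symm
  suffices h : K₀ ≤ K from
    (hle x hx t ⟨ht.1.le, le_rfl⟩).trans (mul_le_mul_of_nonneg_right h (hbpos x hx t).le)
  by_contra! hKK
  have hK₀pos : 0 < K₀ := hK.trans_lt hKK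
  have hzne : z x₀ t₀ ≠ 0 := by
    rw [heq]
    exact (mul_pos hK₀pos (hbpos x₀ hx₀ t₀)).ne'
  have ht₀pos : 0 < t₀ := ht₀.1.lt_of_ne fun h => hzne (by rw [← h]; exact hz.initial x₀ hx₀)
  have ht₀T : t₀ ∈ Ioo 0 T := ⟨ht₀pos, ht₀.2.trans_lt ht.2⟩
  have hx₀D : Fin.init x₀ ∈ D := by
    by_contra h
    exact hzne (hz.lateral x₀ hx₀ h t₀ ht₀T)
  have hy₀ := ((mem_closure_cylinder hlr).1 hx₀).2
  have hcl := ((mem_closure_cylinder hlr).1 hx₀).1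
  have hslope : HasDerivWithinAt
      (fun s => K₀ * (Real.exp (μ * t₀ - p * s) * ψ s) - z (Fin.snoc (Fin.init x₀) s) t₀)
      (K₀ * (Real.exp (μ * t₀ - p * x₀ (Fin.last n)) * ψ' (x₀ (Fin.last n)))
        - robinTrace p l r z x₀ t₀) (Icc l r) (x₀ (Fin.last n)) := by
    refine (((hasDerivAt_exp_mul (p := p) (μ * t₀) (h1 _) rfl).const_mul
      K₀).hasDerivWithinAt.sub (hasDerivWithinAt_normalDeriv hlr hz.smooth hx₀
        (Ioo_subset_Icc_self ht₀T))).congr_deriv ?_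
    rw [robinTrace, heq, barrier]
    ring
  have hslope0 : K₀ * (Real.exp (μ * t₀ - p * x₀ (Fin.last n)) * ψ (x₀ (Fin.last n)))
      - z (Fin.snoc (Fin.init x₀) (x₀ (Fin.last n))) t₀ = 0 := by
    rw [Fin.snoc_init_self, heq, barrier, sub_self]
  have hslopep : ∀ s ∈ Icc l r, 0 ≤ K₀ * (Real.exp (μ * t₀ - p * s) * ψ s)
      - z (Fin.snoc (Fin.init x₀) s) t₀ := fun s hs => by
    have := hle _ (snoc_mem_closure_cylinder hlr hcl hs) t₀ ht₀
    simp only [barrier, Fin.snoc_last] at this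
    linarith
  have hKlt : ∀ {y w : ℝ}, 0 < w → K * (Real.exp y * w) < K₀ * (Real.exp y * w) := fun hw =>
    mul_lt_mul_of_pos_right hKK (mul_pos (Real.exp_pos _) hw)
  rcases hy₀.1.eq_or_lt with hyl | hyl
  · have hxs : (Fin.snoc (Fin.init x₀) l : Fin (n + 1) → ℝ) = x₀ := by rw [hyl]; simp
    rw [← hyl] at hslope hslope0
    have hs := hslope.nonneg_of_left_end hlr hslope0 hslopep
    rcases hl _ hx₀D t₀ ht₀T with h | ⟨h, h'⟩
    · have := hKlt (y := μ * t₀ - p * l) (hpos l ⟨le_rfl, hlr.le⟩)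
      linarith
    · rw [hxs] at h'
      have := hKlt (y := μ * t₀ - p * l) (neg_pos.2 h)
      linarith
  rcases hy₀.2.eq_or_lt with hyr | hyr
  · have hxs : (Fin.snoc (Fin.init x₀) r : Fin (n + 1) → ℝ) = x₀ := by rw [← hyr]; simp
    rw [hyr] at hslope hslope0
    have hs := hslope.nonpos_of_right_end hlr hslope0 hslopep
    rcases hr _ hx₀D t₀ ht₀T with h | ⟨h, h'⟩
    · have := hKlt (y := μ * t₀ - p * r) (hpos r ⟨hlr.le, le_rfl⟩)
      linarith
    · rw [hxs] at h'
      have := hKlt (y := μ * t₀ - p * r) h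
      linarith
  have hxc : x₀ ∈ cylinder D l r := ⟨hx₀D, hyl, hyr⟩
  have hO := isOpen_cylinder_prod hD l r T
  have hq : (x₀, t₀) ∈ cylinder D l r ×ˢ Ioo 0 T := ⟨hxc, ht₀T⟩
  have hop := parabolicOp_sub_mul (a := a) (b := b) (c := c) hz.smoothOn_interior
    (contDiff_barrier (p := p) (μ := μ) hψ).contDiffOn hO K₀ hq
  have hnonneg := parabolicOp_nonneg_of_max (a := a) (b := b) (c := c)
    (z := fun x t => z x t - K₀ * barrier p μ ψ x t)
    (hz.smoothOn_interior.sub (contDiffOn_const.mul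
      (contDiff_barrier (p := p) (μ := μ) hψ).contDiffOn)) hO hq
    (fun i j => hsymm i j t₀) (hell t₀ ht₀T) (by rw [heq, sub_self])
    (by
      filter_upwards [(isOpen_cylinder hD l r).mem_nhds hxc] with y hy
      linarith [hle y (subset_closure hy) t₀ ht₀])
    ht₀pos (fun s hs => by linarith [hle x₀ hx₀ s ⟨hs.1, hs.2.trans ht₀.2⟩])
  rw [hop, hz.pde x₀ hxc t₀ ht₀T, parabolicOp_barrier h1 h2] at hnonneg
  have := mul_pos hK₀pos (mul_pos (Real.exp_pos (μ * t₀ - p * x₀ (Fin.last n)))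
    (hsuper _ hy₀ t₀ ht₀T))
  linarith

end Barrier

section Propagation

variable {n : ℕ} {a : Fin (n + 1) → Fin (n + 1) → ℝ → ℝ} {b : Fin (n + 1) → ℝ → ℝ} {c : ℝ → ℝ}
  {D : Set (Fin n → ℝ)} {l r T p μ ν N : ℝ} {z : (Fin (n + 1) → ℝ) → ℝ → ℝ}
  {ψ ψ' ψ'' : ℝ → ℝ}

/-- Bounds on the coefficients on `(0, T)`: the diffusion matrix is symmetric and positive, the
last diffusion coefficient lies in `[ν, N]`, and the drift and reaction coefficients of the
transformed operator are bounded by `N`. -/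
structure CoeffBounds (a : Fin (n + 1) → Fin (n + 1) → ℝ → ℝ) (b : Fin (n + 1) → ℝ → ℝ)
    (c : ℝ → ℝ) (T p ν N : ℝ) : Prop where
  symm : ∀ i j t, a i j t = a j i t
  nonneg : ∀ t ∈ Ioo 0 T, ∀ ξ : Fin (n + 1) → ℝ, 0 ≤ ∑ i, ∑ j, a i j t * ξ i * ξ j
  diffusion : ∀ t ∈ Ioo 0 T, a (Fin.last n) (Fin.last n) t ∈ Icc ν N
  drift : ∀ t ∈ Ioo 0 T, |transDrift p a b t| ≤ N
  reaction : ∀ t ∈ Ioo 0 T, |transReaction p a b c t| ≤ N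

/-- Nonnegative profiles `ψ` on `[l, r]` that are strict supersolutions of every one-dimensional
operator with coefficients controlled by `ν` and `N`. -/
structure IsSupersolution (ν N μ l r : ℝ) (ψ ψ' ψ'' : ℝ → ℝ) : Prop where
  smooth : ContDiff ℝ ∞ ψ
  hasDerivAt : ∀ y, HasDerivAt ψ (ψ' y) y
  hasDerivAt' : ∀ y, HasDerivAt ψ' (ψ'' y) y
  nonneg : ∀ y ∈ Icc l r, 0 ≤ ψ y
  le : N ≤ μ
  super : ∀ y ∈ Icc l r, ∀ A ∈ Icc ν N, ∀ q s : ℝ, |q| ≤ N → |s| ≤ N →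
    0 < barrierOp μ A q s (ψ y) (ψ' y) (ψ'' y)

lemma IsCompact.exists_forall_mul_add_pos {S : Set ℝ} (hS : IsCompact S) {f g : ℝ → ℝ}
    (hf : Continuous f) (hg : Continuous g) (hf0 : ∀ y ∈ S, 0 ≤ f y)
    (hfg : ∀ y ∈ S, f y = 0 → 0 < g y) :
    ∃ R : ℝ, ∀ τ ≥ R, ∀ y ∈ S, 0 < τ * f y + g y := by
  have hS' : IsCompact (S ∩ {y | g y ≤ 0}) := hS.inter_right (isClosed_le hg continuous_const)
  have hpos : ∀ y ∈ S ∩ {y | g y ≤ 0}, 0 < f y := fun y hy =>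
    (hf0 y hy.1).lt_of_ne fun h => (hfg y hy.1 h.symm).not_ge hy.2
  have hcont : ContinuousOn (fun y => -g y / f y) (S ∩ {y | g y ≤ 0}) :=
    hg.neg.continuousOn.div hf.continuousOn fun y hy => (hpos y hy).ne'
  obtain ⟨R, hR⟩ := hS'.bddAbove_image hcont
  refine ⟨max 0 (R + 1), fun τ hτ y hy => ?_⟩
  by_cases hgy : g y ≤ 0
  · have h1 : -g y / f y ≤ R := hR ⟨y, ⟨hy, hgy⟩, rfl⟩
    have h2 : -g y / f y < τ := by linarith [le_max_right 0 (R + 1)]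
    linarith [(div_lt_iff₀ (hpos y ⟨hy, hgy⟩)).1 h2]
  · have h1 : 0 ≤ τ * f y := mul_nonneg ((le_max_left _ _).trans hτ) (hf0 y hy)
    linarith

lemma exists_isSupersolution (hν : 0 < ν) (hνN : ν ≤ N) (hψ : ContDiff ℝ ∞ ψ)
    (h1 : ∀ y, HasDerivAt ψ (ψ' y) y) (h2 : ∀ y, HasDerivAt ψ' (ψ'' y) y)
    (hcont : Continuous ψ'') (hnonneg : ∀ y ∈ Icc l r, 0 ≤ ψ y)
    (hzero : ∀ y ∈ Icc l r, ψ y = 0 → N * |ψ' y| < -(ν * ψ'' y)) :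
    ∃ R, ∀ μ ≥ R, IsSupersolution ν N μ l r ψ ψ' ψ'' := by
  have hN : 0 < N := hν.trans_le hνN
  have hψ'c : Continuous ψ' := continuous_iff_continuousAt.2 fun y => (h2 y).continuousAt
  obtain ⟨R, hR⟩ := (isCompact_Icc (a := l) (b := r)).exists_forall_mul_add_pos hψ.continuous
    (g := fun y => -max (ν * ψ'' y) (N * ψ'' y) - N * |ψ' y|) (by fun_prop) hnonneg
    fun y hy h => by
      have h3 := hzero y hy h
      have h4 : ν * ψ'' y < 0 := by
        have := mul_nonneg hN.le (abs_nonneg (ψ' y))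
        linarith
      have h5 : N * ψ'' y ≤ ν * ψ'' y :=
        mul_le_mul_of_nonpos_right hνN (neg_of_mul_neg_right h4 hν.le).le
      rw [max_eq_left h5]
      linarith
  refine ⟨max N (R + N), fun μ hμ => ⟨hψ, h1, h2, hnonneg, (le_max_left _ _).trans hμ,
    fun y hy A hA q s hq hs => ?_⟩⟩
  have h3 := hR (μ - N) (by linarith [le_max_right N (R + N)]) y hy
  have h4 : A * ψ'' y ≤ max (ν * ψ'' y) (N * ψ'' y) := by
    rcases le_total 0 (ψ'' y) with h | h
    · exact (mul_le_mul_of_nonneg_right hA.2 h).trans (le_max_right _ _)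
    · exact (mul_le_mul_of_nonpos_right hA.1 h).trans (le_max_left _ _)
  have h5 : -(N * |ψ' y|) ≤ q * ψ' y := by
    have := mul_le_mul_of_nonneg_right hq (abs_nonneg (ψ' y))
    rw [← abs_mul] at this
    linarith [neg_abs_le (q * ψ' y)]
  have h6 : -N * ψ y ≤ s * ψ y :=
    mul_le_mul_of_nonneg_right (by linarith [neg_abs_le s]) (hnonneg y hy)
  simp only [barrierOp]
  linarith

lemma robinTrace_neg (x : Fin (n + 1) → ℝ) (t : ℝ) :
    robinTrace p l r (fun x t => -z x t) x t = -robinTrace p l r z x t := by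
  have h : normalDeriv l r (fun x t => -z x t) x t = -normalDeriv l r z x t :=
    derivWithin.fun_neg
  rw [robinTrace, h, robinTrace]
  ring

/-- The weighted bound `|w| ≤ K exp (μ t - p y)` on the section at height `y`. -/
def SectionBound (D : Set (Fin n → ℝ)) (T p μ : ℝ) (w : (Fin (n + 1) → ℝ) → ℝ → ℝ) (y K : ℝ) :
    Prop :=
  ∀ X ∈ D, ∀ t ∈ Ioo 0 T, |w (Fin.snoc X y) t| ≤ K * Real.exp (μ * t - p * y)

/-- Two-sided comparison principle for error solutions. -/
lemma IsErrorSolution.abs_le_barrier (hD : IsOpen D) (hDb : Bornology.IsBounded D) (hlr : l < r)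
    (hco : CoeffBounds a b c T p ν N) (hz : IsErrorSolution a b c T D l r z)
    (hψ : IsSupersolution ν N μ l r ψ ψ' ψ'') {K : ℝ} (hK : 0 ≤ K)
    (hl : SectionBound D T p μ z l (K * ψ l) ∨
      (ψ' l < 0 ∧ SectionBound D T p μ (robinTrace p l r z) l (K * -ψ' l)))
    (hr : SectionBound D T p μ z r (K * ψ r) ∨
      (0 < ψ' r ∧ SectionBound D T p μ (robinTrace p l r z) r (K * ψ' r)))
    {x : Fin (n + 1) → ℝ} (hx : x ∈ closure (cylinder D l r)) {t : ℝ} (ht : t ∈ Ioo 0 T) :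
    |z x t| ≤ K * barrier p μ ψ x t := by
  have key : ∀ w, IsErrorSolution a b c T D l r w → (∀ x t, |w x t| = |z x t|) →
      (∀ x t, |robinTrace p l r w x t| = |robinTrace p l r z x t|) → ∀ δ > 0,
      w x t ≤ K * barrier p μ ψ x t + K * Real.exp (μ * t - p * x (Fin.last n)) * δ := by
    intro w hw habs hrob δ hδ
    have hadd : ∀ X ∈ D, ∀ t ∈ Ioo 0 T, ∀ y, |w (Fin.snoc X y) t|
        ≤ K * ψ y * Real.exp (μ * t - p * y) →
        w (Fin.snoc X y) t ≤ K * (Real.exp (μ * t - p * y) * (ψ y + δ)) := fun X _ t _ y h => by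
      have : 0 ≤ K * (Real.exp (μ * t - p * y) * δ) := by positivity
      linarith [le_abs_self (w (Fin.snoc X y) t)]
    have h := hw.le_barrier (p := p) (μ := μ) (ψ := fun y => ψ y + δ) (ψ' := ψ') (ψ'' := ψ'')
      hD hDb hlr hco.symm hco.nonneg (hψ.smooth.add contDiff_const)
      (fun y => (hψ.hasDerivAt y).add_const δ) hψ.hasDerivAt'
      (fun y hy => by linarith [hψ.nonneg y hy])
      (fun y hy t ht => by
        have h1 := hψ.super y hy _ (hco.diffusion t ht) _ _ (hco.drift t ht) (hco.reaction t ht)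
        have h2 : 0 ≤ (μ + transReaction p a b c t) * δ :=
          mul_nonneg (by linarith [neg_le_of_abs_le (hco.reaction t ht), hψ.le]) hδ.le
        simp only [barrierOp] at h1 ⊢
        linarith)
      hK
      (fun X hX t ht => hl.imp (fun h => hadd X hX t ht l (habs _ _ ▸ h X hX t ht))
        fun h => ⟨h.1, by
          have h2 := h.2 X hX t ht
          rw [← hrob] at h2
          linarith [neg_le_of_abs_le h2]⟩)
      (fun X hX t ht => hr.imp (fun h => hadd X hX t ht r (habs _ _ ▸ h X hX t ht))
        fun h => ⟨h.1, by
          have h2 := h.2 X hX t ht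
          rw [← hrob] at h2
          linarith [le_of_abs_le h2]⟩)
      hx ht
    simp only [barrier] at h ⊢
    linarith
  have key' : ∀ w, IsErrorSolution a b c T D l r w → (∀ x t, |w x t| = |z x t|) →
      (∀ x t, |robinTrace p l r w x t| = |robinTrace p l r z x t|) →
      w x t ≤ K * barrier p μ ψ x t := by
    intro w hw habs hrob
    refine le_of_forall_pos_le_add fun ε hε => ?_
    have hC : 0 < K * Real.exp (μ * t - p * x (Fin.last n)) + 1 := by positivity
    have h := key w hw habs hrob (ε / (K * Real.exp (μ * t - p * x (Fin.last n)) + 1))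
      (by positivity)
    refine h.trans (add_le_add_right ?_ _)
    rw [mul_div_assoc', div_le_iff₀ hC]
    nlinarith
  rw [abs_le']
  exact ⟨key' z hz (fun _ _ => rfl) fun _ _ => rfl,
    key' _ (hz.neg hD) (fun _ _ => abs_neg _) fun _ _ => by rw [robinTrace_neg, abs_neg]⟩

/-- Dirichlet bounds at both ends of `[l, r]` improve by a factor `θ < 1` at an interior point. -/
lemma exists_interior_contraction (hD : IsOpen D) (hDb : Bornology.IsBounded D) (hν : 0 < ν)
    (hνN : ν ≤ N) (hco : CoeffBounds a b c T p ν N) {y : ℝ} (hy : y ∈ Ioo l r) :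
    ∃ θ ∈ Ico (0 : ℝ) 1, ∃ R, ∀ μ ≥ R, ∀ z, IsErrorSolution a b c T D l r z → ∀ K ≥ 0,
      SectionBound D T p μ z l K → SectionBound D T p μ z r K →
      SectionBound D T p μ z y (θ * K) := by
  have hlr : l < r := hy.1.trans hy.2
  set η : ℝ := 1 / (r - l) ^ 2 with hη
  have hηpos : 0 < η := by have := sub_pos.2 hlr; positivity
  have hη' : η * (r - l) ^ 2 = 1 := by
    have := (sub_pos.2 hlr).ne'
    rw [hη]; field_simp
  have hpos : ∀ s, 0 < 1 - η * ((s - l) * (r - s)) := fun s => by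
    have : (s - l) * (r - s) ≤ (r - l) ^ 2 / 4 := by nlinarith [sq_nonneg (2 * s - l - r)]
    nlinarith [mul_le_mul_of_nonneg_left this hηpos.le]
  obtain ⟨R, hR⟩ := exists_isSupersolution (l := l) (r := r)
    (ψ := fun s => 1 - η * ((s - l) * (r - s)))
    (ψ' := fun s => η * (2 * s - l - r)) (ψ'' := fun _ => 2 * η) hν hνN (by fun_prop)
    (fun s => by
      refine (((((hasDerivAt_id' s).sub_const l).mul
        ((hasDerivAt_id' s).const_sub r)).const_mul η).const_sub 1).congr_deriv ?_
      ring)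
    (fun s => by
      refine (((((hasDerivAt_id' s).const_mul 2).sub_const l).sub_const r).const_mul
        η).congr_deriv ?_
      ring)
    continuous_const (fun s _ => (hpos s).le) (fun s _ h => absurd h (hpos s).ne')
  refine ⟨1 - η * ((y - l) * (r - y)), ⟨(hpos y).le, ?_⟩, R, fun μ hμ z hz K hK hl hr X hX t ht => ?_⟩
  · have := mul_pos hηpos (mul_pos (sub_pos.2 hy.1) (sub_pos.2 hy.2))
    linarith
  have h := hz.abs_le_barrier hD hDb hlr hco (hR μ hμ) hK (Or.inl (by simpa using hl))
    (Or.inl (by simpa using hr))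
    (snoc_mem_closure_cylinder hlr (subset_closure hX) (Ioo_subset_Icc_self hy)) ht
  simp only [barrier, Fin.snoc_last] at h
  linarith

/-- Bounds on the Robin traces at both ends bound the solution itself. -/
lemma exists_bound_of_robinTrace (hD : IsOpen D) (hDb : Bornology.IsBounded D) (hν : 0 < ν)
    (hνN : ν ≤ N) (hco : CoeffBounds a b c T p ν N) (hlr : l < r) :
    ∃ C R, ∀ μ ≥ R, ∀ z, IsErrorSolution a b c T D l r z → ∀ K ≥ 0,
      SectionBound D T p μ (robinTrace p l r z) l K →
      SectionBound D T p μ (robinTrace p l r z) r K →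
      ∀ x ∈ cylinder D l r, ∀ t ∈ Ioo 0 T,
        |z x t| ≤ C * K * Real.exp (μ * t - p * x (Fin.last n)) := by
  have hL : 0 < r - l := sub_pos.2 hlr
  have hpos : ∀ s, 0 < 1 + (s - (l + r) / 2) ^ 2 := fun s => by positivity
  obtain ⟨R, hR⟩ := exists_isSupersolution (l := l) (r := r)
    (ψ := fun s => 1 + (s - (l + r) / 2) ^ 2)
    (ψ' := fun s => 2 * (s - (l + r) / 2)) (ψ'' := fun _ => 2) hν hνN (by fun_prop)
    (fun s => by
      refine ((((hasDerivAt_id' s).sub_const ((l + r) / 2)).pow 2).const_add 1).congr_deriv ?_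
      norm_num)
    (fun s => by
      refine (((hasDerivAt_id' s).sub_const ((l + r) / 2)).const_mul 2).congr_deriv ?_
      ring)
    continuous_const (fun s _ => (hpos s).le) (fun s _ h => absurd h (hpos s).ne')
  refine ⟨(1 + (r - l) ^ 2) / (r - l), R, fun μ hμ z hz K hK hl hr x hx t ht => ?_⟩
  have h := hz.abs_le_barrier hD hDb hlr hco (hR μ hμ) (div_nonneg hK hL.le)
    (Or.inr ⟨by linarith, by
      convert hl using 1
      field_simp
      ring⟩)
    (Or.inr ⟨by linarith, by
      convert hr using 1
      field_simp
      ring⟩) (subset_closure hx) ht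
  refine h.trans ?_
  have h1 : 1 + (x (Fin.last n) - (l + r) / 2) ^ 2 ≤ 1 + (r - l) ^ 2 := by
    nlinarith [hx.2.1, hx.2.2]
  calc K / (r - l) * barrier p μ (fun s => 1 + (s - (l + r) / 2) ^ 2) x t
      = K / (r - l) * Real.exp (μ * t - p * x (Fin.last n))
        * (1 + (x (Fin.last n) - (l + r) / 2) ^ 2) := by rw [barrier]; ring
    _ ≤ K / (r - l) * Real.exp (μ * t - p * x (Fin.last n)) * (1 + (r - l) ^ 2) :=
      mul_le_mul_of_nonneg_left h1 (by positivity)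
    _ = _ := by ring

end Propagation

section DirichletEnds

variable {n : ℕ} {a : Fin (n + 1) → Fin (n + 1) → ℝ → ℝ} {b : Fin (n + 1) → ℝ → ℝ} {c : ℝ → ℝ}
  {D : Set (Fin n → ℝ)} {l r T p μ ν N : ℝ} {z : (Fin (n + 1) → ℝ) → ℝ → ℝ}
  {ψ ψ' ψ'' : ℝ → ℝ}

lemma SectionBound.mono {w : (Fin (n + 1) → ℝ) → ℝ → ℝ} {y K K' : ℝ}
    (h : SectionBound D T p μ w y K) (hK : K ≤ K') : SectionBound D T p μ w y K' :=
  fun X hX t ht => (h X hX t ht).trans (mul_le_mul_of_nonneg_right hK (Real.exp_pos _).le)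

/-- The derivative at a common zero of the difference between a barrier and a function with
vanishing boundary value. -/
lemma hasDerivWithinAt_barrier_sub (hlr : l < r)
    (hz : ContDiffOn ℝ ∞ (Function.uncurry z) (closure (cylinder D l r) ×ˢ Icc 0 T))
    (hψ : ∀ y, HasDerivAt ψ (ψ' y) y) {X : Fin n → ℝ} (hX : X ∈ D) {t : ℝ} (ht : t ∈ Ioo 0 T)
    (K : ℝ) {y : ℝ} (hy : y ∈ Icc l r) (hψ0 : ψ y = 0) (hz0 : z (Fin.snoc X y) t = 0) :
    HasDerivWithinAt
      (fun s => K * (Real.exp (μ * t - p * s) * ψ s) - z (Fin.snoc X s) t)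
      (K * (Real.exp (μ * t - p * y) * ψ' y) - robinTrace p l r z (Fin.snoc X y) t)
      (Icc l r) y := by
  have h := hasDerivWithinAt_normalDeriv hlr hz
    (snoc_mem_closure_cylinder hlr (subset_closure hX) hy) (Ioo_subset_Icc_self ht)
  simp only [Fin.init_snoc, Fin.snoc_last] at h
  refine (((hasDerivAt_exp_mul (p := p) (μ * t) (hψ y) rfl).const_mul
    K).hasDerivWithinAt.sub h).congr_deriv ?_
  rw [robinTrace, hψ0, hz0]
  ring

lemma exists_profile_parameter {L : ℝ} (hν : 0 < ν) (hN : 0 < N) (hL : 0 < L) :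
    ∃ κ : ℝ, 0 < κ ∧ 1 ≤ κ * L ∧ N < 2 * κ * ν := by
  refine ⟨N / ν + 1 / L, by positivity, ?_, ?_⟩
  · rw [add_mul, one_div_mul_cancel hL.ne']
    have : 0 < N / ν * L := by positivity
    linarith
  · have h1 : (N / ν + 1 / L) * ν = N + 1 / L * ν := by rw [add_mul, div_mul_cancel₀ _ hν.ne']
    have : 0 < 1 / L * ν := by positivity
    linarith

/-- If the solution vanishes at both ends or vanishes at `l` and has its Robin trace at `r`
controlled, then its Robin trace at `l` is controlled. -/
lemma exists_robinTrace_left (hD : IsOpen D) (hDb : Bornology.IsBounded D) (hν : 0 < ν)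
    (hνN : ν ≤ N) (hco : CoeffBounds a b c T p ν N) (hlr : l < r) :
    ∃ R, ∀ μ ≥ R, ∀ z, IsErrorSolution a b c T D l r z → ∀ K ≥ 0,
      SectionBound D T p μ z l 0 →
      (SectionBound D T p μ z r 0 ∨ SectionBound D T p μ (robinTrace p l r z) r K) →
      SectionBound D T p μ (robinTrace p l r z) l K := by
  have hL : 0 < r - l := sub_pos.2 hlr
  have hN : 0 < N := hν.trans_le hνN
  obtain ⟨κ, hκpos, hκL, hκN⟩ := exists_profile_parameter hν hN hL
  have hq : ∀ s : ℝ, 0 < 1 - κ * s + (κ * s) ^ 2 := fun s => by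
    nlinarith [sq_nonneg (κ * s - 1)]
  obtain ⟨R, hR⟩ := exists_isSupersolution (l := l) (r := r)
    (ψ := fun y => (y - l) * (1 - κ * (y - l) + (κ * (y - l)) ^ 2))
    (ψ' := fun y => 1 - 2 * κ * (y - l) + 3 * κ ^ 2 * (y - l) ^ 2)
    (ψ'' := fun y => -2 * κ + 6 * κ ^ 2 * (y - l)) hν hνN (by fun_prop)
    (fun y => by
      have h := (hasDerivAt_id' y).sub_const l
      refine (h.mul (((h.const_mul κ).const_sub 1).add ((h.const_mul κ).pow 2))).congr_deriv ?_
      simp only [Pi.add_apply, Pi.pow_apply]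
      push_cast
      ring)
    (fun y => by
      have h := (hasDerivAt_id' y).sub_const l
      refine (((h.const_mul (2 * κ)).const_sub 1).add
        ((h.pow 2).const_mul (3 * κ ^ 2))).congr_deriv ?_
      push_cast
      ring)
    (by fun_prop) (fun y hy => mul_nonneg (sub_nonneg.2 hy.1) (hq _).le)
    (fun y _ h => by
      have h0 : y - l = 0 := (mul_eq_zero.1 h).resolve_right (hq _).ne'
      simp only [h0]
      norm_num
      linarith)
  refine ⟨R, fun μ hμ z hz K hK hl hr X hX t ht => ?_⟩
  have hz0 : z (Fin.snoc X l) t = 0 := by simpa using hl X hX t ht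
  have hend : 1 ≤ 1 - 2 * κ * (r - l) + 3 * κ ^ 2 * (r - l) ^ 2 := by nlinarith
  have hle : ∀ y ∈ Icc l r, _ := fun y hy =>
    hz.abs_le_barrier hD hDb hlr hco (hR μ hμ) hK (Or.inl (by simpa using hl))
      (hr.imp (fun h => h.mono (mul_nonneg hK (mul_nonneg hL.le (hq _).le)))
        fun h => ⟨by linarith, h.mono (le_mul_of_one_le_right hK hend)⟩)
      (snoc_mem_closure_cylinder hlr (subset_closure hX) hy) ht
  simp only [barrier, Fin.snoc_last] at hle
  have h1 := (hasDerivWithinAt_barrier_sub (p := p) (μ := μ) hlr hz.smooth (hR μ hμ).hasDerivAt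
    hX ht K ⟨le_rfl, hlr.le⟩ (by simp) hz0).nonneg_of_left_end hlr (by simp [hz0])
    fun y hy => sub_nonneg.2 (le_of_abs_le (hle y hy))
  have h2 := (hasDerivWithinAt_barrier_sub (p := p) (μ := μ) hlr (hz.neg hD).smooth
    (hR μ hμ).hasDerivAt hX ht K ⟨le_rfl, hlr.le⟩ (by simp) (by simp [hz0])).nonneg_of_left_end
    hlr (by simp [hz0]) fun y hy => by linarith [neg_le_of_abs_le (hle y hy)]
  rw [robinTrace_neg] at h2
  rw [abs_le]
  constructor <;> norm_num at h1 h2 <;> linarith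

/-- If the solution vanishes at both ends or vanishes at `r` and has its Robin trace at `l`
controlled, then its Robin trace at `r` is controlled. -/
lemma exists_robinTrace_right (hD : IsOpen D) (hDb : Bornology.IsBounded D) (hν : 0 < ν)
    (hνN : ν ≤ N) (hco : CoeffBounds a b c T p ν N) (hlr : l < r) :
    ∃ R, ∀ μ ≥ R, ∀ z, IsErrorSolution a b c T D l r z → ∀ K ≥ 0,
      (SectionBound D T p μ z l 0 ∨ SectionBound D T p μ (robinTrace p l r z) l K) →
      SectionBound D T p μ z r 0 →
      SectionBound D T p μ (robinTrace p l r z) r K := by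
  have hL : 0 < r - l := sub_pos.2 hlr
  have hN : 0 < N := hν.trans_le hνN
  obtain ⟨κ, hκpos, hκL, hκN⟩ := exists_profile_parameter hν hN hL
  have hq : ∀ s : ℝ, 0 < 1 - κ * s + (κ * s) ^ 2 := fun s => by
    nlinarith [sq_nonneg (κ * s - 1)]
  obtain ⟨R, hR⟩ := exists_isSupersolution (l := l) (r := r)
    (ψ := fun y => (r - y) * (1 - κ * (r - y) + (κ * (r - y)) ^ 2))
    (ψ' := fun y => -(1 - 2 * κ * (r - y) + 3 * κ ^ 2 * (r - y) ^ 2))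
    (ψ'' := fun y => -2 * κ + 6 * κ ^ 2 * (r - y)) hν hνN (by fun_prop)
    (fun y => by
      have h := (hasDerivAt_id' y).const_sub r
      refine (h.mul (((h.const_mul κ).const_sub 1).add ((h.const_mul κ).pow 2))).congr_deriv ?_
      simp only [Pi.add_apply, Pi.pow_apply]
      push_cast
      ring)
    (fun y => by
      have h := (hasDerivAt_id' y).const_sub r
      refine (((h.const_mul (2 * κ)).const_sub 1).add
        ((h.pow 2).const_mul (3 * κ ^ 2))).neg.congr_deriv ?_
      push_cast
      ring)
    (by fun_prop) (fun y hy => mul_nonneg (sub_nonneg.2 hy.2) (hq _).le)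
    (fun y _ h => by
      have h0 : r - y = 0 := (mul_eq_zero.1 h).resolve_right (hq _).ne'
      simp only [h0]
      norm_num
      linarith)
  refine ⟨R, fun μ hμ z hz K hK hl hr X hX t ht => ?_⟩
  have hz0 : z (Fin.snoc X r) t = 0 := by simpa using hr X hX t ht
  have hend : 1 ≤ 1 - 2 * κ * (r - l) + 3 * κ ^ 2 * (r - l) ^ 2 := by nlinarith
  have hle : ∀ y ∈ Icc l r, _ := fun y hy =>
    hz.abs_le_barrier hD hDb hlr hco (hR μ hμ) hK
      (hl.imp (fun h => h.mono (mul_nonneg hK (mul_nonneg hL.le (hq _).le)))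
        fun h => ⟨by linarith, h.mono (le_mul_of_one_le_right hK (by linarith))⟩)
      (Or.inl (by simpa using hr))
      (snoc_mem_closure_cylinder hlr (subset_closure hX) hy) ht
  simp only [barrier, Fin.snoc_last] at hle
  have h1 := (hasDerivWithinAt_barrier_sub (p := p) (μ := μ) hlr hz.smooth (hR μ hμ).hasDerivAt
    hX ht K ⟨hlr.le, le_rfl⟩ (by simp) hz0).nonpos_of_right_end hlr (by simp [hz0])
    fun y hy => sub_nonneg.2 (le_of_abs_le (hle y hy))
  have h2 := (hasDerivWithinAt_barrier_sub (p := p) (μ := μ) hlr (hz.neg hD).smooth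
    (hR μ hμ).hasDerivAt hX ht K ⟨hlr.le, le_rfl⟩ (by simp) (by simp [hz0])).nonpos_of_right_end
    hlr (by simp [hz0]) fun y hy => by linarith [neg_le_of_abs_le (hle y hy)]
  rw [robinTrace_neg] at h2
  rw [abs_le]
  constructor <;> norm_num at h1 h2 <;> linarith

end DirichletEnds

section Schwarz

variable {n : ℕ} {a : Fin (n + 1) → Fin (n + 1) → ℝ → ℝ} {b : Fin (n + 1) → ℝ → ℝ} {c : ℝ → ℝ}
  {D : Set (Fin n → ℝ)} {l r T p μ ν N : ℝ}

/-- At the height `y` the function vanishes or its Robin trace satisfies the weighted bound. -/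
def EndBound (D : Set (Fin n → ℝ)) (T p μ l r : ℝ) (z : (Fin (n + 1) → ℝ) → ℝ → ℝ) (y K : ℝ) :
    Prop :=
  SectionBound D T p μ z y 0 ∨ SectionBound D T p μ (robinTrace p l r z) y K

lemma eventually_sectionBound_ends (hD : IsOpen D) (hDb : Bornology.IsBounded D) (hν : 0 < ν)
    (hνN : ν ≤ N) (hco : CoeffBounds a b c T p ν N) (hlr : l < r) :
    ∀ᶠ μ in atTop, ∀ z, IsErrorSolution a b c T D l r z → ∀ K ≥ 0,
      EndBound D T p μ l r z l K → EndBound D T p μ l r z r K →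
      SectionBound D T p μ (robinTrace p l r z) l K ∧
        SectionBound D T p μ (robinTrace p l r z) r K := by
  obtain ⟨R₁, h₁⟩ := exists_robinTrace_left hD hDb hν hνN hco hlr
  obtain ⟨R₂, h₂⟩ := exists_robinTrace_right hD hDb hν hνN hco hlr
  filter_upwards [eventually_ge_atTop R₁, eventually_ge_atTop R₂] with μ hμ₁ hμ₂ z hz K hK hl hr
  exact ⟨hl.elim (fun h => h₁ μ hμ₁ z hz K hK h hr) id,
    hr.elim (fun h => h₂ μ hμ₂ z hz K hK hl h) id⟩

/-- The Robin trace of an error solution at an interior height is smaller, by a fixed factor, than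
the bound on the Robin traces at the ends. -/
lemma eventually_robinTrace_contraction (hD : IsOpen D) (hDb : Bornology.IsBounded D) (hν : 0 < ν)
    (hνN : ν ≤ N) (hco : CoeffBounds a b c T p ν N) {y : ℝ} (hy : y ∈ Ioo l r) :
    ∀ᶠ θ in 𝓝[<] (1 : ℝ), ∀ᶠ μ in atTop, ∀ z, IsErrorSolution a b c T D l r z → ∀ K ≥ 0,
      EndBound D T p μ l r z l K → EndBound D T p μ l r z r K →
      SectionBound D T p μ (robinTrace p l r z) y (θ * K) := by
  have hlr : l < r := hy.1.trans hy.2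
  obtain ⟨θ₀, hθ₀, R, hR⟩ := exists_interior_contraction hD hDb hν hνN hco hy
  filter_upwards [Ioo_mem_nhdsLT hθ₀.2] with θ hθ
  filter_upwards [eventually_ge_atTop R, eventually_sectionBound_ends hD hDb hν hνN hco hlr]
    with μ hμ hends z hz K hK hl hr
  obtain ⟨hl', hr'⟩ := hends z hz K hK hl hr
  exact (hR μ hμ _ (hz.robin hD hlr p) K hK hl' hr').mono (mul_le_mul_of_nonneg_right hθ.1.le hK)

lemma eventually_exists_bound (hD : IsOpen D) (hDb : Bornology.IsBounded D) (hν : 0 < ν)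
    (hνN : ν ≤ N) (hco : CoeffBounds a b c T p ν N) (hlr : l < r) :
    ∀ᶠ μ in atTop, ∃ C, ∀ z, IsErrorSolution a b c T D l r z → ∀ K ≥ 0,
      EndBound D T p μ l r z l K → EndBound D T p μ l r z r K →
      ∀ x ∈ cylinder D l r, ∀ t ∈ Ioo 0 T,
        |z x t| ≤ C * K * Real.exp (μ * t - p * x (Fin.last n)) := by
  obtain ⟨C, R, hR⟩ := exists_bound_of_robinTrace hD hDb hν hνN hco hlr
  filter_upwards [eventually_ge_atTop R, eventually_sectionBound_ends hD hDb hν hνN hco hlr]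
    with μ hμ hends
  refine ⟨C, fun z hz K hK hl hr => ?_⟩
  obtain ⟨hl', hr'⟩ := hends z hz K hK hl hr
  exact hR μ hμ z hz K hK hl' hr'

lemma IsErrorSolution.eventually_sectionBound {z : (Fin (n + 1) → ℝ) → ℝ → ℝ}
    (hDb : Bornology.IsBounded D) (hlr : l < r) (hz : IsErrorSolution a b c T D l r z)
    (p μ : ℝ) {y : ℝ} (hy : y ∈ Icc l r) : ∀ᶠ K in atTop, SectionBound D T p μ z y K := by
  have hcont : ContinuousOn (fun q : (Fin (n + 1) → ℝ) × ℝ =>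
      |z q.1 q.2| / Real.exp (μ * q.2 - p * q.1 (Fin.last n)))
      (closure (cylinder D l r) ×ˢ Icc 0 T) :=
    hz.smooth.continuousOn.abs.div (by fun_prop) fun q _ => (Real.exp_pos _).ne'
  obtain ⟨K, hK⟩ :=
    ((isCompact_closure_cylinder hDb hlr).prod isCompact_Icc).bddAbove_image hcont
  filter_upwards [eventually_ge_atTop K] with K₁ hK₁ X hX t ht
  have h : |z (Fin.snoc X y) t| / Real.exp (μ * t - p * y) ≤ K := by
    simpa using hK (mem_image_of_mem _ (show ((Fin.snoc X y : Fin (n + 1) → ℝ), t) ∈ _ from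
      ⟨snoc_mem_closure_cylinder hlr (subset_closure hX) hy, Ioo_subset_Icc_self ht⟩))
  exact (div_le_iff₀ (Real.exp_pos _)).1 (h.trans hK₁)

/-- Convergence to zero of the errors of the Schwarz waveform relaxation algorithm. -/
lemma tendsto_schwarz_error (hD : IsOpen D) (hDb : Bornology.IsBounded D) (hν : 0 < ν)
    (hνN : ν ≤ N) (hco : CoeffBounds a b c T p ν N) {I : ℕ} {aa bb : ℕ → ℝ}
    (hlt : ∀ l ∈ Finset.Icc 1 I, aa l < bb l)
    (hleft : ∀ l ∈ Finset.Ico 1 I, aa (l + 1) ∈ Ioo (aa l) (bb l))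
    (hright : ∀ l ∈ Finset.Ico 1 I, bb l ∈ Ioo (aa (l + 1)) (bb (l + 1)))
    {E : ℕ → ℕ → (Fin (n + 1) → ℝ) → ℝ → ℝ}
    (hE : ∀ k, ∀ l ∈ Finset.Icc 1 I, IsErrorSolution a b c T D (aa l) (bb l) (E k l))
    (hfirst : ∀ k, ∀ X ∈ D, ∀ t ∈ Ioo 0 T, E k 1 (Fin.snoc X (aa 1)) t = 0)
    (hlast : ∀ k, ∀ X ∈ D, ∀ t ∈ Ioo 0 T, E k I (Fin.snoc X (bb I)) t = 0)
    (htl : ∀ k, ∀ l ∈ Finset.Ico 1 I, ∀ X ∈ D, ∀ t ∈ Ioo 0 T,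
      robinTrace p (aa (l + 1)) (bb (l + 1)) (E (k + 1) (l + 1)) (Fin.snoc X (aa (l + 1))) t
        = robinTrace p (aa l) (bb l) (E k l) (Fin.snoc X (aa (l + 1))) t)
    (htr : ∀ k, ∀ l ∈ Finset.Ico 1 I, ∀ X ∈ D, ∀ t ∈ Ioo 0 T,
      robinTrace p (aa l) (bb l) (E (k + 1) l) (Fin.snoc X (bb l)) t
        = robinTrace p (aa (l + 1)) (bb (l + 1)) (E k (l + 1)) (Fin.snoc X (bb l)) t)
    {l : ℕ} (hl : l ∈ Finset.Icc 1 I) {x : Fin (n + 1) → ℝ} (hx : x ∈ cylinder D (aa l) (bb l))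
    {t : ℝ} (ht : t ∈ Ioo 0 T) : Tendsto (fun k => E k l x t) atTop (𝓝 0) := by
  have hmem : ∀ {l}, l ∈ Finset.Ico 1 I → l ∈ Finset.Icc 1 I := by simp; omega
  have hmem' : ∀ {l}, l ∈ Finset.Ico 1 I → l + 1 ∈ Finset.Icc 1 I := by simp
  obtain ⟨θ, hθ, hcl, hcr⟩ := ((eventually_mem_set.2 (Ioo_mem_nhdsLT (zero_lt_one (α := ℝ)))).and
    (((Finset.Ico 1 I).eventually_all.2 fun l hl =>
      eventually_robinTrace_contraction hD hDb hν hνN hco (hleft l hl)).and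
    ((Finset.Ico 1 I).eventually_all.2 fun l hl =>
      eventually_robinTrace_contraction hD hDb hν hνN hco (hright l hl)))).exists
  obtain ⟨μ, ⟨hcl, hcr⟩, C, hC⟩ := ((((Finset.Ico 1 I).eventually_all.2 hcl).and
    ((Finset.Ico 1 I).eventually_all.2 hcr)).and
    (eventually_exists_bound hD hDb hν hνN hco (hlt l hl))).exists
  obtain ⟨M, ⟨hM0, hMl⟩, hMr⟩ := (((eventually_ge_atTop (0 : ℝ)).and
    ((Finset.Ico 1 I).eventually_all.2 fun l hl =>
      (((hE 0 (l + 1) (hmem' hl)).robin hD (hlt _ (hmem' hl)) p).eventually_sectionBound hDb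
        (hlt _ (hmem' hl)) p μ (left_mem_Icc.2 (hlt _ (hmem' hl)).le)))).and
    ((Finset.Ico 1 I).eventually_all.2 fun l hl =>
      (((hE 0 l (hmem hl)).robin hD (hlt _ (hmem hl)) p).eventually_sectionBound hDb
        (hlt _ (hmem hl)) p μ (right_mem_Icc.2 (hlt _ (hmem hl)).le)))).exists
  have hend : ∀ k K,
      (∀ l ∈ Finset.Ico 1 I, SectionBound D T p μ
        (robinTrace p (aa (l + 1)) (bb (l + 1)) (E k (l + 1))) (aa (l + 1)) K) →
      (∀ l ∈ Finset.Ico 1 I, SectionBound D T p μ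
        (robinTrace p (aa l) (bb l) (E k l)) (bb l) K) →
      ∀ l ∈ Finset.Icc 1 I, EndBound D T p μ (aa l) (bb l) (E k l) (aa l) K ∧
        EndBound D T p μ (aa l) (bb l) (E k l) (bb l) K := by
    intro k K h1 h2 l hl
    rw [Finset.mem_Icc] at hl
    constructor
    · rcases hl.1.eq_or_lt with rfl | h
      · exact Or.inl fun X hX t ht => by simp [hfirst k X hX t ht]
      · obtain ⟨m, rfl⟩ : ∃ m, l = m + 1 := ⟨l - 1, by omega⟩
        exact Or.inr (h1 m (by simp; omega))
    · rcases hl.2.eq_or_lt with rfl | h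
      · exact Or.inl fun X hX t ht => by simp [hlast k X hX t ht]
      · exact Or.inr (h2 l (by simp; omega))
  have hdecay : ∀ k, ∀ l ∈ Finset.Icc 1 I,
      EndBound D T p μ (aa l) (bb l) (E k l) (aa l) (θ ^ k * M) ∧
        EndBound D T p μ (aa l) (bb l) (E k l) (bb l) (θ ^ k * M) := by
    intro k
    induction k with
    | zero => exact hend 0 _ (by simpa using hMl) (by simpa using hMr)
    | succ k ih =>
      have hK : θ ^ k * M ≥ 0 := mul_nonneg (pow_nonneg hθ.1.le k) hM0
      rw [pow_succ', mul_assoc]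
      refine hend (k + 1) _ (fun l hl X hX t ht => ?_) fun l hl X hX t ht => ?_
      · rw [htl k l hl X hX t ht]
        exact hcl l hl _ (hE k l (hmem hl)) _ hK (ih l (hmem hl)).1 (ih l (hmem hl)).2 X hX t ht
      · rw [htr k l hl X hX t ht]
        exact hcr l hl _ (hE k (l + 1) (hmem' hl)) _ hK (ih _ (hmem' hl)).1 (ih _ (hmem' hl)).2
          X hX t ht
  have hlim : Tendsto (fun k => C * (θ ^ k * M) * Real.exp (μ * t - p * x (Fin.last n))) atTop
      (𝓝 0) := by
    simpa using (((tendsto_pow_atTop_nhds_zero_of_lt_one hθ.1.le hθ.2).mul_const M).const_mul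
      C).mul_const (Real.exp (μ * t - p * x (Fin.last n)))
  exact squeeze_zero_norm (fun k => hC _ (hE k l hl) _ (mul_nonneg (pow_nonneg hθ.1.le k) hM0)
    (hdecay k l hl).1 (hdecay k l hl).2 x hx t ht) hlim

lemma exists_coeffBounds (hν : 0 ≤ ν) (p : ℝ) (hsymm : ∀ i j t, a i j t = a j i t)
    (ha : ∀ i j, ∃ C, ∀ t, |a i j t| ≤ C) (hb : ∀ i, ∃ C, ∀ t, |b i t| ≤ C)
    (hc : ∃ C, ∀ t, |c t| ≤ C)
    (hell : ∀ t ∈ Ioo 0 T, ∀ ξ : Fin (n + 1) → ℝ,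
      ν * ∑ i, ξ i ^ 2 ≤ ∑ i, ∑ j, a i j t * ξ i * ξ j) :
    ∃ N, ν ≤ N ∧ CoeffBounds a b c T p ν N := by
  obtain ⟨A, hA⟩ := ha (Fin.last n) (Fin.last n)
  obtain ⟨B, hB⟩ := hb (Fin.last n)
  obtain ⟨C, hC⟩ := hc
  have hA0 : 0 ≤ A := (abs_nonneg _).trans (hA 0)
  have hB0 : 0 ≤ B := (abs_nonneg _).trans (hB 0)
  have hC0 : 0 ≤ C := (abs_nonneg _).trans (hC 0)
  have hpA : 0 ≤ |p| * A := by positivity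
  have hpB : 0 ≤ |p| * B := by positivity
  have hppA : 0 ≤ p ^ 2 * A := by positivity
  have hpa : ∀ t, |p * a (Fin.last n) (Fin.last n) t| ≤ |p| * A := fun t => by
    rw [abs_mul]; gcongr; exact hA t
  have hpb : ∀ t, |p * b (Fin.last n) t| ≤ |p| * B := fun t => by
    rw [abs_mul]; gcongr; exact hB t
  have hppa : ∀ t, |p ^ 2 * a (Fin.last n) (Fin.last n) t| ≤ p ^ 2 * A := fun t => by
    rw [abs_mul, abs_of_nonneg (sq_nonneg p)]; gcongr; exact hA t
  refine ⟨ν + A + B + C + 2 * (|p| * A) + |p| * B + p ^ 2 * A, by linarith, hsymm,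
    fun t ht ξ => (mul_nonneg hν (Finset.sum_nonneg fun i _ => sq_nonneg _)).trans (hell t ht ξ),
    fun t ht => ⟨?_, by linarith [le_of_abs_le (hA t)]⟩, fun t _ => ?_, fun t _ => ?_⟩
  · have h := hell t ht (Pi.single (Fin.last n) 1)
    simpa [Pi.single_apply, ite_pow] using h
  · have h1 := abs_le.1 (hB t)
    have h2 := abs_le.1 (hpa t)
    rw [transDrift, abs_le]
    constructor <;> linarith
  · have h1 := abs_le.1 (hC t)
    have h2 := abs_le.1 (hpb t)
    have h3 := abs_le.1 (hppa t)
    rw [transReaction, abs_le]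
    constructor <;> linarith

end Schwarz

section Difference

variable {n : ℕ} {a : Fin (n + 1) → Fin (n + 1) → ℝ → ℝ} {b : Fin (n + 1) → ℝ → ℝ} {c : ℝ → ℝ}
  {D : Set (Fin n → ℝ)} {l r α β T p : ℝ} {u v f g : (Fin (n + 1) → ℝ) → ℝ → ℝ}

lemma cylinder_subset_cylinder (hα : α ≤ l) (hβ : r ≤ β) : cylinder D l r ⊆ cylinder D α β :=
  fun _ hx => ⟨hx.1, Ioo_subset_Ioo hα hβ hx.2⟩

lemma closure_cylinder_prod_subset (hα : α ≤ l) (hβ : r ≤ β) (T : ℝ) :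
    closure (cylinder D l r) ×ˢ Icc 0 T ⊆ closure (cylinder D α β) ×ˢ Icc 0 T :=
  prod_mono (closure_mono (cylinder_subset_cylinder hα hβ)) subset_rfl

/-- The Robin trace of the difference between a solution on a subcylinder and one on the whole
cylinder. -/
lemma robinTrace_sub (hlr : l < r) (hα : α ≤ l) (hβ : r ≤ β)
    (hv : ContDiffOn ℝ ∞ (Function.uncurry v) (closure (cylinder D l r) ×ˢ Icc 0 T))
    (hu : ContDiffOn ℝ ∞ (Function.uncurry u) (closure (cylinder D α β) ×ˢ Icc 0 T))
    {x : Fin (n + 1) → ℝ} (hx : x ∈ closure (cylinder D l r)) {t : ℝ} (ht : t ∈ Icc 0 T) :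
    robinTrace p l r (fun x t => v x t - u x t) x t
      = fderivWithin ℝ (fun y => v y t) (closure (cylinder D l r)) x (Pi.single (Fin.last n) 1)
        + p * v x t - robinTrace p α β u x t := by
  have hu' := (hasDerivWithinAt_normalDeriv ((hα.trans_lt hlr).trans_le hβ) hu
    (closure_mono (cylinder_subset_cylinder hα hβ) hx) ht).mono (Icc_subset_Icc hα hβ)
  have h : normalDeriv l r (fun x t => v x t - u x t) x t = _ :=
    ((hasDerivWithinAt_normalDeriv hlr hv hx ht).sub hu').derivWithin
      (uniqueDiffWithinAt_last hlr hx)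
  rw [fderivWithin_eq_normalDeriv hlr hv hx ht, robinTrace, h, robinTrace]
  ring

/-- The difference of two solutions with the same data is an error solution. -/
lemma IsErrorSolution.of_sub (hD : IsOpen D) (hα : α ≤ l) (hβ : r ≤ β) (hT : 0 ≤ T)
    (hv : ContDiffOn ℝ ∞ (Function.uncurry v) (closure (cylinder D l r) ×ˢ Icc 0 T))
    (hu : ContDiffOn ℝ ∞ (Function.uncurry u) (closure (cylinder D α β) ×ˢ Icc 0 T))
    (hv_pde : ∀ x ∈ cylinder D l r, ∀ t ∈ Ioo 0 T, parabolicOp a b c v x t = f x t)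
    (hu_pde : ∀ x ∈ cylinder D α β, ∀ t ∈ Ioo 0 T, parabolicOp a b c u x t = f x t)
    (hv_bc : ∀ x ∈ frontier (cylinder D l r) ∩ frontier (cylinder D α β), ∀ t ∈ Ioo 0 T,
      v x t = g x t)
    (hu_bc : ∀ x ∈ frontier (cylinder D α β), ∀ t ∈ Ioo 0 T, u x t = g x t)
    (hv_ic : ∀ x ∈ cylinder D l r, v x 0 = g x 0) (hu_ic : ∀ x ∈ cylinder D α β, u x 0 = g x 0) :
    IsErrorSolution a b c T D l r (fun x t => v x t - u x t) where
  smooth := hv.sub (hu.mono (closure_cylinder_prod_subset hα hβ T))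
  pde x hx t ht := by
    have hsub := cylinder_prod_subset D l r T
    have h := parabolicOp_sub_mul (a := a) (b := b) (c := c) (hv.mono hsub)
      (hu.mono (hsub.trans (closure_cylinder_prod_subset hα hβ T)))
      (isOpen_cylinder_prod hD l r T) 1 (show (x, t) ∈ _ from ⟨hx, ht⟩)
    rw [hv_pde x hx t ht, hu_pde x (cylinder_subset_cylinder hα hβ hx) t ht] at h
    simpa using h
  initial := by
    have hmaps : MapsTo (fun x : Fin (n + 1) → ℝ => (x, (0 : ℝ))) (closure (cylinder D l r))
        (closure (cylinder D l r) ×ˢ Icc 0 T) := fun x hx => ⟨hx, left_mem_Icc.2 hT⟩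
    have hcont : ContinuousOn (fun x => v x 0 - u x 0) (closure (cylinder D l r)) :=
      (hv.continuousOn.sub (hu.continuousOn.mono (closure_cylinder_prod_subset hα hβ T))).comp
        (by fun_prop : Continuous fun x : Fin (n + 1) → ℝ => (x, (0 : ℝ))).continuousOn hmaps
    have heq : EqOn (fun x => v x 0 - u x 0) (fun _ => 0) (cylinder D l r) := fun x hx => by
      simp [hv_ic x hx, hu_ic x (cylinder_subset_cylinder hα hβ hx)]
    exact heq.of_subset_closure hcont continuousOn_const subset_closure subset_rfl
  lateral x hx hxD t ht := by
    have h1 : x ∈ frontier (cylinder D l r) := by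
      rw [(isOpen_cylinder hD l r).frontier_eq]
      exact ⟨hx, fun h => hxD h.1⟩
    have h2 : x ∈ frontier (cylinder D α β) := by
      rw [(isOpen_cylinder hD α β).frontier_eq]
      exact ⟨closure_mono (cylinder_subset_cylinder hα hβ) hx, fun h => hxD h.1⟩
    rw [hv_bc x ⟨h1, h2⟩ t ht, hu_bc x h2 t ht, sub_self]

lemma snoc_mem_frontier_cylinder (hD : IsOpen D) (hlr : l < r) {X : Fin n → ℝ} (hX : X ∈ D) {y : ℝ}
    (hy : y = l ∨ y = r) : (Fin.snoc X y : Fin (n + 1) → ℝ) ∈ frontier (cylinder D l r) := by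
  rw [(isOpen_cylinder hD l r).frontier_eq]
  refine ⟨snoc_mem_closure_cylinder hlr (subset_closure hX) ?_, fun h => ?_⟩
  · rcases hy with rfl | rfl <;> simp [hlr.le]
  · have := h.2
    rcases hy with rfl | rfl <;> simp at this

end Difference

/-- pointwise convergence of the overlapping optimized Schwarz
waveform relaxation iterates: `u_l^k(x,t) − u(x,t) → 0` as `k → ∞` for every
`l` and every `(x,t) ∈ Ω_l × (0,T)`. -/
theorem schwarz_iterates_pointwise_convergence
    {n : ℕ} (T p ν₀ : ℝ) (hT : 0 < T) (hν₀ : 0 < ν₀)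
    -- coefficients: symmetric, smooth, bounded, uniformly elliptic on (0,T)
    (a : Fin (n+1) → Fin (n+1) → ℝ → ℝ) (b : Fin (n+1) → ℝ → ℝ) (c : ℝ → ℝ)
    (ha_symm : ∀ i j t, a i j t = a j i t)
    (ha_smooth : ∀ i j, ContDiff ℝ (⊤ : ℕ∞) (a i j))
    (ha_bdd : ∀ i j, ∃ C, ∀ t, |a i j t| ≤ C)
    (hb_smooth : ∀ i, ContDiff ℝ (⊤ : ℕ∞) (b i))
    (hb_bdd : ∀ i, ∃ C, ∀ t, |b i t| ≤ C)
    (hc_smooth : ContDiff ℝ (⊤ : ℕ∞) c)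
    (hc_bdd : ∃ C, ∀ t, |c t| ≤ C)
    (hell : ∀ t ∈ Ioo (0:ℝ) T, ∀ ξ : Fin (n+1) → ℝ,
      ν₀ * ∑ i, ξ i ^ 2 ≤ ∑ i, ∑ j, a i j t * ξ i * ξ j)
    -- geometry: Ω = D × (α,β), overlapping decomposition Ω_l = D × (a_l,b_l)
    (D : Set (Fin n → ℝ)) (hD_open : IsOpen D) (hD_bdd : Bornology.IsBounded D)
    (hD_ne : D.Nonempty)
    (α β : ℝ) (hαβ : α < β)
    (I : ℕ) (hI : 2 ≤ I)
    (aa bb : ℕ → ℝ) (haa1 : aa 1 = α) (hbbI : bb I = β)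
    (horder : ∀ l, 1 ≤ l → l + 1 ≤ I →
      aa l < aa (l + 1) ∧ aa (l + 1) < bb l ∧ bb l < bb (l + 1))
    (Ω : Set (Fin (n+1) → ℝ))
    (hΩ : Ω = {x : Fin (n+1) → ℝ | Fin.init x ∈ D ∧ x (Fin.last n) ∈ Ioo α β})
    (Ωl : ℕ → Set (Fin (n+1) → ℝ))
    (hΩl : ∀ l, Ωl l =
      {x : Fin (n+1) → ℝ | Fin.init x ∈ D ∧ x (Fin.last n) ∈ Ioo (aa l) (bb l)})
    -- data
    (f g : (Fin (n+1) → ℝ) → ℝ → ℝ)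
    (hf_smooth : ContDiffOn ℝ (⊤ : ℕ∞)
      (fun q : (Fin (n+1) → ℝ) × ℝ => f q.1 q.2) (closure Ω ×ˢ Icc 0 T))
    (hf_bdd : ∃ C, ∀ x ∈ closure Ω, ∀ t ∈ Icc (0:ℝ) T, |f x t| ≤ C)
    (hg_smooth : ContDiffOn ℝ (⊤ : ℕ∞)
      (fun q : (Fin (n+1) → ℝ) × ℝ => g q.1 q.2) (closure Ω ×ˢ Icc 0 T))
    (hg_bdd : ∃ C, ∀ x ∈ closure Ω, ∀ t ∈ Icc (0:ℝ) T, |g x t| ≤ C)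
    -- the exact solution u
    (u : (Fin (n+1) → ℝ) → ℝ → ℝ)
    (hu_smooth : ContDiffOn ℝ (⊤ : ℕ∞)
      (fun q : (Fin (n+1) → ℝ) × ℝ => u q.1 q.2) (closure Ω ×ˢ Icc 0 T))
    (hu_bdd : ∃ C, ∀ x ∈ closure Ω, ∀ t ∈ Icc (0:ℝ) T, |u x t| ≤ C)
    (hu_pde : ∀ x ∈ Ω, ∀ t ∈ Ioo (0:ℝ) T, parabolicOp a b c u x t = f x t)
    (hu_bc : ∀ x ∈ frontier Ω, ∀ t ∈ Ioo (0:ℝ) T, u x t = g x t)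
    (hu_ic : ∀ x ∈ Ω, u x 0 = g x 0)
    -- the Schwarz waveform relaxation iterates u_l^k = U k l, k ≥ 1, 1 ≤ l ≤ I
    (U : ℕ → ℕ → (Fin (n+1) → ℝ) → ℝ → ℝ)
    (hU_smooth : ∀ k, 1 ≤ k → ∀ l, 1 ≤ l → l ≤ I →
      ContDiffOn ℝ (⊤ : ℕ∞) (fun q : (Fin (n+1) → ℝ) × ℝ => U k l q.1 q.2)
        (closure (Ωl l) ×ˢ Icc 0 T))
    (hU_pde : ∀ k, 1 ≤ k → ∀ l, 1 ≤ l → l ≤ I →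
      ∀ x ∈ Ωl l, ∀ t ∈ Ioo (0:ℝ) T, parabolicOp a b c (U k l) x t = f x t)
    -- Robin transmission conditions (for k ≥ 2; the first iterates are arbitrary,
    -- coming from an arbitrary smooth bounded initial guess h⁰)
    (hU_robin_left : ∀ k, 2 ≤ k → ∀ l, 2 ≤ l → l ≤ I → ∀ X ∈ D, ∀ t ∈ Ioo (0:ℝ) T,
      fderivWithin ℝ (fun y => U k l y t) (closure (Ωl l))
          (Fin.snoc X (aa l)) (Pi.single (Fin.last n) 1)
        + p * U k l (Fin.snoc X (aa l)) t
      = fderivWithin ℝ (fun y => U (k - 1) (l - 1) y t) (closure (Ωl (l - 1)))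
          (Fin.snoc X (aa l)) (Pi.single (Fin.last n) 1)
        + p * U (k - 1) (l - 1) (Fin.snoc X (aa l)) t)
    (hU_robin_right : ∀ k, 2 ≤ k → ∀ l, 1 ≤ l → l + 1 ≤ I → ∀ X ∈ D, ∀ t ∈ Ioo (0:ℝ) T,
      fderivWithin ℝ (fun y => U k l y t) (closure (Ωl l))
          (Fin.snoc X (bb l)) (Pi.single (Fin.last n) 1)
        + p * U k l (Fin.snoc X (bb l)) t
      = fderivWithin ℝ (fun y => U (k - 1) (l + 1) y t) (closure (Ωl (l + 1)))
          (Fin.snoc X (bb l)) (Pi.single (Fin.last n) 1)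
        + p * U (k - 1) (l + 1) (Fin.snoc X (bb l)) t)
    -- inherited boundary and initial conditions
    (hU_bc : ∀ k, 1 ≤ k → ∀ l, 1 ≤ l → l ≤ I →
      ∀ x ∈ frontier (Ωl l) ∩ frontier Ω, ∀ t ∈ Ioo (0:ℝ) T, U k l x t = g x t)
    (hU_ic : ∀ k, 1 ≤ k → ∀ l, 1 ≤ l → l ≤ I → ∀ x ∈ Ωl l, U k l x 0 = g x 0)
    -- special treatment of the extreme subdomains
    (hU_left_end : ∀ k, 1 ≤ k → ∀ X ∈ D, ∀ t ∈ Ioo (0:ℝ) T,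
      U k 1 (Fin.snoc X α) t = g (Fin.snoc X α) t)
    (hU_right_end : ∀ k, 1 ≤ k → ∀ X ∈ D, ∀ t ∈ Ioo (0:ℝ) T,
      U k I (Fin.snoc X β) t = g (Fin.snoc X β) t) :
    ∀ l, 1 ≤ l → l ≤ I → ∀ x ∈ Ωl l, ∀ t ∈ Ioo (0:ℝ) T,
      Tendsto (fun k => U k l x t - u x t) atTop (nhds 0) := by
  obtain rfl : Ωl = fun l => cylinder D (aa l) (bb l) := funext hΩl
  obtain rfl : Ω = cylinder D α β := hΩ
  have hab : ∀ l ∈ Finset.Icc 1 I, aa l < bb l := fun l hl => by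
    rw [Finset.mem_Icc] at hl
    rcases hl.2.eq_or_lt with rfl | h
    · obtain ⟨m, rfl⟩ : ∃ m, l = m + 1 := ⟨l - 1, by omega⟩
      have := horder m (by omega) le_rfl
      exact this.2.1.trans this.2.2
    · have := horder l hl.1 h
      exact this.1.trans this.2.1
  have hα : ∀ l ∈ Finset.Icc 1 I, α ≤ aa l := fun l hl => by
    rw [Finset.mem_Icc] at hl
    obtain ⟨h1, h2⟩ := hl
    induction l, h1 using Nat.le_induction with
    | base => exact haa1.ge
    | succ l h1 ih => exact (ih (by omega)).trans (horder l h1 h2).1.le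
  have hβ : ∀ l ∈ Finset.Icc 1 I, bb l ≤ β := fun l hl => by
    rw [Finset.mem_Icc] at hl
    obtain ⟨h1, h2⟩ := hl
    induction h2 using Nat.decreasingInduction with
    | self => exact hbbI.le
    | of_succ l h2 ih => exact (horder l h1 h2).2.2.le.trans (ih (by omega))
  have hmem : ∀ {l}, l ∈ Finset.Ico 1 I → l ∈ Finset.Icc 1 I := by simp; omega
  have hmem' : ∀ {l}, l ∈ Finset.Ico 1 I → l + 1 ∈ Finset.Icc 1 I := by simp
  have hleft : ∀ l ∈ Finset.Ico 1 I, aa (l + 1) ∈ Ioo (aa l) (bb l) := fun l hl => by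
    have h := horder l (Finset.mem_Ico.1 hl).1 (Finset.mem_Ico.1 hl).2
    exact ⟨h.1, h.2.1⟩
  have hright : ∀ l ∈ Finset.Ico 1 I, bb l ∈ Ioo (aa (l + 1)) (bb (l + 1)) := fun l hl => by
    have h := horder l (Finset.mem_Ico.1 hl).1 (Finset.mem_Ico.1 hl).2
    exact ⟨h.2.1, h.2.2⟩
  have hUs : ∀ k, ∀ l ∈ Finset.Icc 1 I, ContDiffOn ℝ ∞ (Function.uncurry (U (k + 1) l))
      (closure (cylinder D (aa l) (bb l)) ×ˢ Icc 0 T) := fun k l hl =>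
    hU_smooth (k + 1) (by omega) l (Finset.mem_Icc.1 hl).1 (Finset.mem_Icc.1 hl).2
  have htrace : ∀ k, ∀ l ∈ Finset.Icc 1 I, ∀ X ∈ D, ∀ y ∈ Icc (aa l) (bb l), ∀ t ∈ Ioo 0 T,
      robinTrace p (aa l) (bb l) (fun x t => U (k + 1) l x t - u x t) (Fin.snoc X y) t
        = fderivWithin ℝ (fun y => U (k + 1) l y t) (closure (cylinder D (aa l) (bb l)))
            (Fin.snoc X y) (Pi.single (Fin.last n) 1) + p * U (k + 1) l (Fin.snoc X y) t
          - robinTrace p α β u (Fin.snoc X y) t := fun k l hl X hX y hy t ht =>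
    robinTrace_sub (hab l hl) (hα l hl) (hβ l hl) (hUs k l hl) hu_smooth
      (snoc_mem_closure_cylinder (hab l hl) (subset_closure hX) hy) (Ioo_subset_Icc_self ht)
  obtain ⟨N, hN, hco⟩ := exists_coeffBounds hν₀.le p ha_symm ha_bdd hb_bdd hc_bdd hell
  intro l hl1 hlI x hx t ht
  refine (tendsto_add_atTop_iff_nat 1).1 ?_
  refine tendsto_schwarz_error (E := fun k l x t => U (k + 1) l x t - u x t) hD_open hD_bdd hν₀ hN
    hco hab hleft hright ?_ ?_ ?_ ?_ ?_ (Finset.mem_Icc.2 ⟨hl1, hlI⟩) hx ht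
  · intro k l hl
    have h1 := (Finset.mem_Icc.1 hl).1
    have h2 := (Finset.mem_Icc.1 hl).2
    exact IsErrorSolution.of_sub hD_open (hα l hl) (hβ l hl) hT.le (hUs k l hl)
      hu_smooth (hU_pde _ (by omega) l h1 h2) hu_pde (hU_bc _ (by omega) l h1 h2) hu_bc
      (hU_ic _ (by omega) l h1 h2) hu_ic
  · intro k X hX t ht
    rw [haa1, hU_left_end (k + 1) (by omega) X hX t ht,
      hu_bc _ (snoc_mem_frontier_cylinder hD_open hαβ hX (Or.inl rfl)) t ht, sub_self]
  · intro k X hX t ht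
    rw [hbbI, hU_right_end (k + 1) (by omega) X hX t ht,
      hu_bc _ (snoc_mem_frontier_cylinder hD_open hαβ hX (Or.inr rfl)) t ht, sub_self]
  · intro k l hl X hX t ht
    have h := hU_robin_left (k + 2) (by omega) (l + 1) (by simp at hl; omega)
      (by simp at hl; omega) X hX t ht
    rw [htrace (k + 1) (l + 1) (hmem' hl) X hX _ (left_mem_Icc.2 (hab _ (hmem' hl)).le) t ht,
      htrace k l (hmem hl) X hX _ (Ioo_subset_Icc_self (hleft l hl)) t ht]
    exact congrArg (· - robinTrace p α β u (Fin.snoc X (aa (l + 1))) t) h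
  · intro k l hl X hX t ht
    have h := hU_robin_right (k + 2) (by omega) l (by simp at hl; omega)
      (by simp at hl; omega) X hX t ht
    rw [htrace (k + 1) l (hmem hl) X hX _ (right_mem_Icc.2 (hab _ (hmem hl)).le) t ht,
      htrace k (l + 1) (hmem' hl) X hX _ (Ioo_subset_Icc_self (hright l hl)) t ht]
    exact congrArg (· - robinTrace p α β u (Fin.snoc X (bb l)) t) h
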